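/- arXiv:1409.6714 — 2 statements merged into one kernel-verified Lean document; each statement's English description precedes it below -/
import Mathlib

section
/- There exist constants c > 0 and ε₀ ∈ (0,1) such that for every d ∈ ℕ, every ε with 0 < ε ≤ ε₀, and every point set x_1,…,x_n ∈ [0,1]^d with star discrepancy D*_∞(x_1,…,x_n) ≤ ε, one has n ≥ c · d · ε^{−1}. -/
open MeasureTheory Set

/-!
Two boxes anchored at the origin that contain the same points of the set have, when one lies in
the other, volumes differing by at most `2ε`. Consider the `m ^ d` boxes with corners
`1 - 1/(2d) + a_j/(2dm)`, `a ∈ {0, …, m-1}^d`, where `m = ⌊1/(8ε)⌋`. All have volume at least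
`1/2`, and the boxes with a given trace on the point set are closed under intersection, so they all
contain a smallest one `w`; the volume estimate forces `∑ (a_j - w_j) ≤ d` for each of them
(`sum_sub_le`). At most `4 ^ d` such `a` exist (`card_fiber_le`), so the boxes have at least
`(m/4)^d` distinct traces.

Conversely, anchored boxes have VC dimension at most `d` (`vcDim_traces_le`), so by Sauer–Shelah
there are at most `∑_{k ≤ d} n.choose k ≤ y^{-d} e^{n y}` traces for every `0 < y ≤ 1`
(`sum_choose_mul_pow_le`). With `y = 256 ε`, the assumption `n < d/(256 ε)` gives
at most `(e/(256 ε))^d` traces, fewer than `(1/(64 ε))^d ≤ (m/4)^d`.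
-/

/-- The star discrepancy of the point set `x 0, …, x (n-1)` in `[0,1]^d`. -/
noncomputable def starDisc {d n : ℕ} (x : Fin n → Fin d → ℝ) : ℝ :=
  sSup {v : ℝ | ∃ t ∈ Set.Icc (0 : Fin d → ℝ) 1,
    v = |(∏ j, t j) -
      ((Finset.univ.filter fun i : Fin n => ∀ j, 0 ≤ x i j ∧ x i j < t j).card : ℝ) / n|}

/-- The indices of the points lying in the half-open box `[0, t)`. -/
noncomputable def boxTrace {d n : ℕ} (x : Fin n → Fin d → ℝ) (t : Fin d → ℝ) : Finset (Fin n) :=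
  Finset.univ.filter fun i : Fin n => ∀ j, 0 ≤ x i j ∧ x i j < t j

/-- The corner `1 - 1/(2d) + a_j/(2dm)` of the grid box with integer coordinates `a`. -/
noncomputable def corner (d m : ℕ) (a : Fin d → ℕ) : Fin d → ℝ :=
  fun j => 1 - 1 / (2 * d) + (a j : ℝ) / (2 * d * m)

/-- The index set `{0, …, m-1}^d` of the grid boxes. -/
def grid (d m : ℕ) : Finset (Fin d → ℕ) := Fintype.piFinset fun _ => Finset.range m

lemma boxTrace_inf {d n : ℕ} (x : Fin n → Fin d → ℝ) (s t : Fin d → ℝ) :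
    boxTrace x (s ⊓ t) = boxTrace x s ∩ boxTrace x t := by
  ext i
  simp only [boxTrace, Finset.mem_filter, Finset.mem_univ, true_and, Finset.mem_inter,
    Pi.inf_apply, lt_inf_iff]
  grind

lemma corner_mono {d m : ℕ} {a b : Fin d → ℕ} {j : Fin d} (h : a j ≤ b j) :
    corner d m a j ≤ corner d m b j := by
  unfold corner
  have : (a j : ℝ) ≤ b j := by exact_mod_cast h
  gcongr

lemma corner_inf {d m : ℕ} (a b : Fin d → ℕ) :
    corner d m (a ⊓ b) = corner d m a ⊓ corner d m b := by
  funext j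
  rw [Pi.inf_apply]
  rcases le_total (a j) (b j) with h | h
  · rw [inf_eq_left.2 (corner_mono h)]
    simp [corner, h]
  · rw [inf_eq_right.2 (corner_mono h)]
    simp [corner, h]

lemma abs_sub_le_starDisc {d n : ℕ} (x : Fin n → Fin d → ℝ) {t : Fin d → ℝ}
    (ht : t ∈ Set.Icc (0 : Fin d → ℝ) 1) :
    |(∏ j, t j) - ((boxTrace x t).card : ℝ) / n| ≤ starDisc x := by
  refine le_csSup ⟨1, ?_⟩ ⟨t, ht, rfl⟩
  rintro v ⟨t, ht, rfl⟩
  have h0 : 0 ≤ ∏ j, t j := Finset.prod_nonneg fun j _ => ht.1 j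
  have h1 : ∏ j, t j ≤ 1 := Finset.prod_le_one (fun j _ => ht.1 j) fun j _ => ht.2 j
  have h2 : ((Finset.univ.filter fun i : Fin n => ∀ j, 0 ≤ x i j ∧ x i j < t j).card : ℝ) / n
      ≤ 1 := by
    refine div_le_one_of_le₀ ?_ (Nat.cast_nonneg n)
    exact_mod_cast (Finset.card_le_univ _).trans (by simp)
  have h3 : 0 ≤ ((Finset.univ.filter fun i : Fin n =>
      ∀ j, 0 ≤ x i j ∧ x i j < t j).card : ℝ) / n := by positivity
  rw [abs_le]
  constructor <;> linarith

/-- At most `4 ^ d` vectors lie above `w` at `ℓ¹`-distance at most `d`. The proof gives each of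
them the weight `2 ^ d * ∏ (1/2) ^ (a_j - w_j) ≥ 1` and sums geometric series. -/
lemma card_fiber_le {d m : ℕ} (F : Finset (Fin d → ℕ)) (hF : F ⊆ grid d m) (w : Fin d → ℕ)
    (h : ∀ a ∈ F, w ≤ a ∧ ∑ j, (a j - w j) ≤ d) : F.card ≤ 4 ^ d := by
  have hgeo : ∀ k : ℕ, ∑ i ∈ Finset.range k, ((1 / 2 : ℝ)) ^ i ≤ 2 := fun k => by
    have := sum_geometric_two_le k
    simpa using this
  -- Shifting `F` by `-w` is injective, since `w` is below every member.
  have hinj : Set.InjOn (fun a : Fin d → ℕ => fun j => a j - w j) F := by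
    intro a ha b hb hab
    funext j
    have h1 := congrFun hab j
    have h2 : w j ≤ a j := (h a ha).1 j
    have h3 : w j ≤ b j := (h b hb).1 j
    simp only at h1
    omega
  set G := F.image (fun a : Fin d → ℕ => fun j => a j - w j) with hG
  have hcard : G.card = F.card := Finset.card_image_of_injOn hinj
  have hGsub : G ⊆ grid d m := by
    intro b hb
    obtain ⟨a, ha, rfl⟩ := Finset.mem_image.1 hb
    have := hF ha
    simp only [grid, Fintype.mem_piFinset, Finset.mem_range] at this ⊢
    intro j
    have := this j
    omega
  have hreal : (G.card : ℝ) ≤ 4 ^ d := by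
    calc (G.card : ℝ) = ∑ _b ∈ G, (1 : ℝ) := by simp
      _ ≤ ∑ b ∈ G, 2 ^ d * ∏ j, ((1 / 2 : ℝ)) ^ b j := by
          refine Finset.sum_le_sum fun b hb => ?_
          obtain ⟨a, ha, rfl⟩ := Finset.mem_image.1 hb
          rw [Finset.prod_pow_eq_pow_sum]
          have h1 : ((1 / 2 : ℝ)) ^ d ≤ (1 / 2 : ℝ) ^ (∑ j, (a j - w j)) :=
            pow_le_pow_of_le_one (by norm_num) (by norm_num) (h a ha).2
          calc (1 : ℝ) = 2 ^ d * (1 / 2) ^ d := by rw [← mul_pow]; norm_num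
            _ ≤ _ := by gcongr
      _ ≤ ∑ b ∈ grid d m, 2 ^ d * ∏ j, ((1 / 2 : ℝ)) ^ b j :=
          Finset.sum_le_sum_of_subset_of_nonneg hGsub fun _ _ _ => by positivity
      _ = 2 ^ d * (∑ i ∈ Finset.range m, ((1 / 2 : ℝ)) ^ i) ^ d := by
          rw [← Finset.mul_sum, grid, ← Finset.prod_univ_sum]
          simp
      _ ≤ 2 ^ d * 2 ^ d := by
          gcongr
          exact hgeo m
      _ = 4 ^ d := by rw [← mul_pow]; norm_num
  rw [← hcard]
  exact_mod_cast hreal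

lemma corner_mem {d m : ℕ} (hd : 1 ≤ d) (hm : 1 ≤ m) {a : Fin d → ℕ} (ha : a ∈ grid d m) :
    corner d m a ∈ Set.Icc (0 : Fin d → ℝ) 1 := by
  have hd' : (1 : ℝ) ≤ d := by exact_mod_cast hd
  have hm' : (1 : ℝ) ≤ m := by exact_mod_cast hm
  have hle : 1 / (2 * (d : ℝ)) ≤ 1 := by
    rw [div_le_one (by positivity)]
    linarith
  constructor
  · intro j
    have : 0 ≤ (a j : ℝ) / (2 * d * m) := by positivity
    simp only [corner, Pi.zero_apply]
    linarith
  · intro j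
    simp only [grid, Fintype.mem_piFinset, Finset.mem_range] at ha
    have h1 : (a j : ℝ) ≤ m := by exact_mod_cast (ha j).le
    have h2 : (a j : ℝ) / (2 * d * m) ≤ 1 / (2 * d) := by
      rw [div_le_div_iff₀ (by positivity) (by positivity)]
      nlinarith
    simp only [corner, Pi.one_apply]
    linarith

lemma half_le_prod_corner {d m : ℕ} (hd : 1 ≤ d) (a : Fin d → ℕ) :
    1 / 2 ≤ ∏ j, corner d m a j := by
  have hd' : (1 : ℝ) ≤ d := by exact_mod_cast hd
  have hle : 1 / (2 * (d : ℝ)) ≤ 1 := by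
    rw [div_le_one (by positivity)]
    linarith
  calc (1 / 2 : ℝ) = 1 + d * (-(1 / (2 * d))) := by field_simp; norm_num
    _ ≤ (1 + -(1 / (2 * (d : ℝ)))) ^ d := one_add_mul_le_pow (by linarith) d
    _ = ∏ _j : Fin d, (1 - 1 / (2 * (d : ℝ))) := by simp [sub_eq_add_neg]
    _ ≤ _ := by
      refine Finset.prod_le_prod (fun _ _ => by linarith) fun j _ => ?_
      have : 0 ≤ (a j : ℝ) / (2 * d * m) := by positivity
      simp only [corner]
      linarith

/-- Nested grid boxes whose volumes differ by at most `2ε` have close corners: the volume ratio is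
at least `1 + ∑ (a_j - w_j)/(2dm)`, and the smaller volume is at least `1/2`. -/
lemma sum_sub_le {d m : ℕ} (hd : 1 ≤ d) (hm : 1 ≤ m) {ε : ℝ} (hmε : 8 * m * ε ≤ 1)
    {a w : Fin d → ℕ} (hw : w ∈ grid d m) (hwa : w ≤ a)
    (hvol : ∏ j, corner d m a j - ∏ j, corner d m w j ≤ 2 * ε) :
    ∑ j, (a j - w j) ≤ d := by
  have hd' : (1 : ℝ) ≤ d := by exact_mod_cast hd
  have hm' : (1 : ℝ) ≤ m := by exact_mod_cast hm
  have hwm := corner_mem hd hm hw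
  have hhalf := half_le_prod_corner (m := m) hd w
  set δ : Fin d → ℝ := fun j => ((a j - w j : ℕ) : ℝ) / (2 * d * m) with hδ
  have hδ0 : ∀ j, 0 ≤ δ j := fun j => by positivity
  have hbern : 1 + ∑ j, δ j ≤ ∏ j, (1 + δ j) := by
    induction (Finset.univ : Finset (Fin d)) using Finset.induction_on with
    | empty => simp
    | insert i s hi ih =>
      rw [Finset.sum_insert hi, Finset.prod_insert hi]
      have : 0 ≤ ∑ j ∈ s, δ j := Finset.sum_nonneg fun j _ => hδ0 j
      nlinarith [hδ0 i]
  have hprod : (∏ j, corner d m w j) * ∏ j, (1 + δ j) ≤ ∏ j, corner d m a j := by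
    rw [← Finset.prod_mul_distrib]
    refine Finset.prod_le_prod
      (fun j _ => mul_nonneg (hwm.1 j) (by linarith [hδ0 j])) fun j _ => ?_
    have h1 : corner d m a j = corner d m w j + δ j := by
      simp only [corner, hδ]
      rw [Nat.cast_sub (hwa j)]
      ring
    rw [h1]
    have h2 : corner d m w j ≤ 1 := hwm.2 j
    nlinarith [hδ0 j]
  have hS0 : 0 ≤ ∑ j, δ j := Finset.sum_nonneg fun j _ => hδ0 j
  have hS : ∑ j, δ j ≤ 4 * ε := by nlinarith
  have hsum : ∑ j, δ j = ((∑ j, (a j - w j) : ℕ) : ℝ) / (2 * d * m) := by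
    rw [Nat.cast_sum, Finset.sum_div]
  rw [hsum, div_le_iff₀ (by positivity)] at hS
  have : ((∑ j, (a j - w j) : ℕ) : ℝ) ≤ d := by nlinarith
  exact_mod_cast this

/-- A set shattered by anchored boxes has at most `d` elements: a box containing, for each
coordinate, a point of the set maximal in that coordinate contains the whole set. -/
lemma vcDim_traces_le {d n : ℕ} (x : Fin n → Fin d → ℝ) (hx : ∀ i j, 0 ≤ x i j)
    (T : Finset (Fin d → ℝ)) : (T.image (boxTrace x)).vcDim ≤ d := by
  refine Finset.sup_le fun S hS => ?_
  rw [Finset.mem_shatterer] at hS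
  rcases S.eq_empty_or_nonempty with rfl | hne
  · simp
  choose p hpS hpmax using fun j : Fin d => Finset.exists_max_image S (fun i => x i j) hne
  have hQ : Finset.univ.image p ⊆ S := by
    intro i hi
    obtain ⟨j, -, rfl⟩ := Finset.mem_image.1 hi
    exact hpS j
  obtain ⟨u, hu, hSu⟩ := hS hQ
  obtain ⟨t, -, rfl⟩ := Finset.mem_image.1 hu
  have hsub : S ⊆ Finset.univ.image p := by
    intro i hi
    rw [← hSu, Finset.mem_inter]
    refine ⟨hi, ?_⟩
    simp only [boxTrace, Finset.mem_filter, Finset.mem_univ, true_and]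
    intro j
    refine ⟨hx i j, (hpmax j i hi).trans_lt ?_⟩
    have hpj : p j ∈ S ∩ boxTrace x t := by
      rw [hSu]
      exact Finset.mem_image_of_mem p (Finset.mem_univ j)
    have := (Finset.mem_inter.1 hpj).2
    simp only [boxTrace, Finset.mem_filter, Finset.mem_univ, true_and] at this
    exact (this j).2
  calc S.card ≤ (Finset.univ.image p).card := Finset.card_le_card hsub
    _ ≤ (Finset.univ : Finset (Fin d)).card := Finset.card_image_le
    _ = d := by simp

lemma sum_choose_mul_pow_le (n d : ℕ) {y : ℝ} (hy0 : 0 < y) (hy1 : y ≤ 1) :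
    (∑ k ∈ Finset.Iic d, (n.choose k : ℝ)) * y ^ d ≤ Real.exp (n * y) := by
  calc (∑ k ∈ Finset.Iic d, (n.choose k : ℝ)) * y ^ d
      = ∑ k ∈ Finset.Iic d, (n.choose k : ℝ) * y ^ d := Finset.sum_mul _ _ _
    _ ≤ ∑ k ∈ Finset.Iic d, (n.choose k : ℝ) * y ^ k := by
        refine Finset.sum_le_sum fun k hk => ?_
        have := pow_le_pow_of_le_one hy0.le hy1 (Finset.mem_Iic.1 hk)
        gcongr
    _ ≤ ∑ k ∈ Finset.range (n + 1 + d), (n.choose k : ℝ) * y ^ k := by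
        refine Finset.sum_le_sum_of_subset_of_nonneg ?_ fun _ _ _ => by positivity
        intro k hk
        have := Finset.mem_Iic.1 hk
        simp only [Finset.mem_range]
        omega
    _ = ∑ k ∈ Finset.range (n + 1), (n.choose k : ℝ) * y ^ k := by
        symm
        refine Finset.sum_subset ?_ ?_
        · intro k hk
          simp only [Finset.mem_range] at *
          omega
        · intro k _ hk
          simp only [Finset.mem_range, not_lt] at hk
          rw [Nat.choose_eq_zero_of_lt (by omega)]
          simp
    _ = (y + 1) ^ n := by
        rw [add_pow]
        refine Finset.sum_congr rfl fun k _ => ?_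
        simp [mul_comm]
    _ ≤ (Real.exp y) ^ n := by
        gcongr
        exact Real.add_one_le_exp y
    _ = Real.exp (n * y) := by rw [← Real.exp_nat_mul]

/-- The grid boxes have at least `(m/4) ^ d` distinct traces on a point set of discrepancy at
most `ε ≤ 1/(8m)`. -/
lemma pow_le_card_traces {d n m : ℕ} (hd : 1 ≤ d) (hm : 1 ≤ m) {ε : ℝ}
    (hmε : 8 * m * ε ≤ 1) (x : Fin n → Fin d → ℝ) (hdisc : starDisc x ≤ ε) :
    m ^ d ≤ 4 ^ d * (((grid d m).image (corner d m)).image (boxTrace x)).card := by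
  have hcard : (grid d m).card = m ^ d := by simp [grid]
  rw [← hcard, Finset.image_image]
  refine Finset.card_le_mul_card_image _ _ fun b hb => ?_
  obtain ⟨a₀, ha₀, hb₀⟩ := Finset.mem_image.1 hb
  set F := (grid d m).filter fun a => (boxTrace x ∘ corner d m) a = b with hF
  have hFne : F.Nonempty := ⟨a₀, Finset.mem_filter.2 ⟨ha₀, hb₀⟩⟩
  -- The fiber is closed under intersection of boxes, hence contains its infimum.
  have hw : F.inf' hFne id ∈ F := by
    refine Finset.inf'_mem (F : Set (Fin d → ℕ)) ?_ F hFne id fun a ha => ha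
    intro a ha c hc
    simp only [hF, Finset.coe_filter, Set.mem_ofPred_eq, Function.comp_apply] at ha hc ⊢
    refine ⟨?_, ?_⟩
    · have h1 := ha.1
      simp only [grid, Fintype.mem_piFinset, Finset.mem_range] at h1 ⊢
      intro j
      exact (inf_le_left : a j ⊓ c j ≤ a j).trans_lt (h1 j)
    · rw [corner_inf, boxTrace_inf, ha.2, hc.2, Finset.inter_self]
  refine card_fiber_le F (Finset.filter_subset _ _) (F.inf' hFne id) fun a ha => ?_
  have hwa : F.inf' hFne id ≤ a := Finset.inf'_le id ha
  refine ⟨hwa, ?_⟩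
  obtain ⟨hag, hab⟩ := Finset.mem_filter.1 ha
  obtain ⟨hwg, hwb⟩ := Finset.mem_filter.1 hw
  refine sum_sub_le hd hm hmε hwg hwa ?_
  have h1 := (abs_sub_le_starDisc x (corner_mem hd hm hag)).trans hdisc
  have h2 := (abs_sub_le_starDisc x (corner_mem hd hm hwg)).trans hdisc
  simp only [Function.comp_apply] at hab hwb
  rw [hab] at h1
  rw [hwb] at h2
  rw [abs_le] at h1 h2
  linarith [h1.2, h2.1]

/-- Hinrichs' lower bound: there are `c > 0` and `ε₀ ∈ (0,1)` such that any point set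
in `[0,1]^d` with star discrepancy at most `ε ≤ ε₀` has at least `c · d · ε⁻¹` points. -/
theorem stmt15 :
    ∃ c ε₀ : ℝ, 0 < c ∧ 0 < ε₀ ∧ ε₀ < 1 ∧
      ∀ d : ℕ, 1 ≤ d → ∀ ε : ℝ, 0 < ε → ε ≤ ε₀ →
        ∀ n : ℕ, ∀ x : Fin n → Fin d → ℝ,
          (∀ i, x i ∈ Set.Icc (0 : Fin d → ℝ) 1) →
          starDisc x ≤ ε → c * d * ε⁻¹ ≤ n := by
  refine ⟨1 / 256, 1 / 256, by norm_num, by norm_num, by norm_num, ?_⟩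
  intro d hd ε hε hε₀ n x hx hdisc
  by_contra! hlt
  set m := ⌊1 / (8 * ε)⌋₊ with hm_def
  have hinv : 2 ≤ 1 / (8 * ε) := by
    rw [le_div_iff₀ (by positivity)]
    linarith
  have hm_le : (m : ℝ) ≤ 1 / (8 * ε) := Nat.floor_le (by positivity)
  have hm_gt : 1 / (8 * ε) < m + 1 := Nat.lt_floor_add_one _
  have hm : 1 ≤ m := by
    have : (0 : ℝ) < m := by linarith
    exact_mod_cast this
  have hmε : 8 * m * ε ≤ 1 := by
    rw [le_div_iff₀ (by positivity)] at hm_le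
    linarith
  have hmge : 1 ≤ 16 * m * ε := by
    have h1 : 1 / (8 * ε) ≤ 2 * m := by linarith
    rw [div_le_iff₀ (by positivity)] at h1
    linarith
  set 𝒜 := ((grid d m).image (corner d m)).image (boxTrace x) with h𝒜
  have hlow : m ^ d ≤ 4 ^ d * 𝒜.card := pow_le_card_traces hd hm hmε x hdisc
  have hup : 𝒜.card ≤ ∑ k ∈ Finset.Iic d, n.choose k := by
    calc 𝒜.card ≤ 𝒜.shatterer.card := Finset.card_le_card_shatterer 𝒜
      _ ≤ ∑ k ∈ Finset.Iic 𝒜.vcDim, (Fintype.card (Fin n)).choose k :=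
          Finset.card_shatterer_le_sum_vcDim
      _ ≤ ∑ k ∈ Finset.Iic d, n.choose k := by
          rw [Fintype.card_fin]
          exact Finset.sum_le_sum_of_subset
            (Finset.Iic_subset_Iic.2 (vcDim_traces_le x (fun i j => (hx i).1 j) _))
  have hbinom := sum_choose_mul_pow_le n d (y := 256 * ε) (by positivity) (by linarith)
  have hny : n * (256 * ε) ≤ d := by
    have h1 := mul_le_mul_of_nonneg_right hlt.le (by positivity : 0 ≤ 256 * ε)
    have h2 : 1 / 256 * (d : ℝ) * ε⁻¹ * (256 * ε) = d := by field_simp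
    linarith
  have hexp : Real.exp (n * (256 * ε)) ≤ Real.exp 1 ^ d := by
    rw [← Real.exp_nat_mul, mul_one]
    exact Real.exp_le_exp.2 hny
  have hlow' : (m : ℝ) ^ d ≤ 4 ^ d * ∑ k ∈ Finset.Iic d, (n.choose k : ℝ) := by
    exact_mod_cast hlow.trans (Nat.mul_le_mul_left _ hup)
  have hfinal : (m * (256 * ε)) ^ d ≤ (4 * Real.exp 1) ^ d := by
    rw [mul_pow (m : ℝ), mul_pow 4]
    calc (m : ℝ) ^ d * (256 * ε) ^ d
        ≤ (4 ^ d * ∑ k ∈ Finset.Iic d, (n.choose k : ℝ)) * (256 * ε) ^ d := by gcongr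
      _ = 4 ^ d * ((∑ k ∈ Finset.Iic d, (n.choose k : ℝ)) * (256 * ε) ^ d) := by ring
      _ ≤ 4 ^ d * Real.exp 1 ^ d := by
          gcongr
          exact hbinom.trans hexp
  -- The base on the left is at least `16`, the one on the right is `4e < 12`.
  have hbase : 4 * Real.exp 1 < m * (256 * ε) := by
    linarith [Real.exp_one_lt_d9]
  exact absurd hfinal (not_le.2 (pow_lt_pow_left₀ hbase (by positivity) (by omega)))
end

section
/- There exist constants c, C > 0 such that for all d ∈ ℕ and all n ≥ d, if X_1,…,X_n are independent random points, each uniformly distributed on [0,1]^d, then c · √(d/n) ≤ E[ D*_∞(X_1,…,X_n) ] ≤ C · √(d/n). -/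
/-!
**Lower bound.** Put `δ = 1 / (2d)` and consider only boxes all of whose sides are `1` or `1 - δ`.
The sides are chosen greedily, one direction after the other: direction `j` is cut to `1 - δ`
exactly when at least the proportion `1 - δ` of the points still in the box survives the cut. The
ratio (number of remaining points) / (volume) then never decreases, and in each step its expected
gain is at least the expected positive part of a centred binomial variable with at least `n / 2`
trials and parameter `δ`, which is of order `√(n / d)` (`sum_rowW_posPart`, from the characteristic
function). After `d` steps the surplus has mean of order `√(n d)` (`sum_greedy`), while the volume is
still at least `1 / 2`. Only the bits `X i j < 1 - δ` matter, so this part is a computation with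
finite sums.

**Upper bound.** Chaining along bracketing nets. In logarithmic coordinates `t = exp (-a)` the volume
of a box is `exp (-∑ a)`, so rounding `a` to a grid of mesh `ε / d` gives brackets of volume at most
`ε`, and only grid points with `∑ a ≤ 1 / ε` are needed; for `ε = 4⁻ᵏ` there are at most
`(30 · 16ᵏ)ᵈ` of them (`exists_net`). Increments between consecutive nets are counts in sets of measure
`O(4⁻ᵏ)`; a Bernstein-type exponential moment bound and a union bound (`maximal_ineq`) show that the
largest of them has mean `O((k + 1) 2⁻ᵏ √(d / n))` (`chain_link`), which is summable in `k`. The chain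
stops when `4⁻ᵏ` reaches the order of `√(d / n)`.

Integrability of the discrepancy, without which the Bochner integral would be `0`, follows from
left-continuity: the supremum may be restricted to rational corners (`lt_starDisc_iff`).
-/

open MeasureTheory Set

/-! ### Local discrepancy, measurability, the uniform measure -/

/-- The signed local discrepancy at `t`. -/
noncomputable def locDisc {d n : ℕ} (x : Fin n → Fin d → ℝ) (t : Fin d → ℝ) : ℝ :=
  (∏ j, t j) -
      ((Finset.univ.filter fun i : Fin n => ∀ j, 0 ≤ x i j ∧ x i j < t j).card : ℝ) / n

lemma prod_mem_unit {d : ℕ} {t : Fin d → ℝ} (ht : t ∈ Icc (0 : Fin d → ℝ) 1) :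
    0 ≤ ∏ j, t j ∧ ∏ j, t j ≤ 1 :=
  ⟨Finset.prod_nonneg fun j _ => ht.1 j, Finset.prod_le_one (fun j _ => ht.1 j) fun j _ => ht.2 j⟩

lemma abs_locDisc_le_one {d n : ℕ} (x : Fin n → Fin d → ℝ) {t : Fin d → ℝ}
    (ht : t ∈ Icc (0 : Fin d → ℝ) 1) : |locDisc x t| ≤ 1 := by
  have h := prod_mem_unit ht
  have h2 : ((Finset.univ.filter fun i : Fin n => ∀ j, 0 ≤ x i j ∧ x i j < t j).card : ℝ) / n
      ≤ 1 := by
    refine div_le_one_of_le₀ ?_ (by positivity)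
    exact_mod_cast (Finset.card_filter_le _ _).trans (by simp)
  have h3 : 0 ≤ ((Finset.univ.filter fun i : Fin n => ∀ j, 0 ≤ x i j ∧ x i j < t j).card : ℝ) / n :=
    by positivity
  rw [locDisc, abs_le]
  constructor <;> linarith

lemma starDisc_bddAbove {d n : ℕ} (x : Fin n → Fin d → ℝ) :
    BddAbove {v : ℝ | ∃ t ∈ Set.Icc (0 : Fin d → ℝ) 1, v = |locDisc x t|} := by
  refine ⟨1, ?_⟩
  rintro v ⟨t, ht, rfl⟩
  exact abs_locDisc_le_one x ht

lemma starDisc_nonempty {d n : ℕ} (x : Fin n → Fin d → ℝ) :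
    {v : ℝ | ∃ t ∈ Set.Icc (0 : Fin d → ℝ) 1, v = |locDisc x t|}.Nonempty :=
  ⟨_, 0, ⟨le_rfl, zero_le_one⟩, rfl⟩

lemma abs_locDisc_le_starDisc {d n : ℕ} (x : Fin n → Fin d → ℝ) {t : Fin d → ℝ}
    (ht : t ∈ Icc (0 : Fin d → ℝ) 1) : |locDisc x t| ≤ starDisc x :=
  le_csSup (starDisc_bddAbove x) ⟨t, ht, rfl⟩

lemma starDisc_le {d n : ℕ} (x : Fin n → Fin d → ℝ) {b : ℝ}
    (h : ∀ t ∈ Icc (0 : Fin d → ℝ) 1, |locDisc x t| ≤ b) : starDisc x ≤ b := by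
  refine csSup_le (starDisc_nonempty x) ?_
  rintro v ⟨t, ht, rfl⟩
  exact h t ht

lemma starDisc_nonneg {d n : ℕ} (x : Fin n → Fin d → ℝ) : 0 ≤ starDisc x :=
  (abs_nonneg _).trans (abs_locDisc_le_starDisc x (t := 0) ⟨le_rfl, zero_le_one⟩)

/-- Anchored half-open boxes vary left-continuously with their corner, so rational corners
suffice. -/
lemma lt_starDisc_iff {d n : ℕ} (x : Fin n → Fin d → ℝ) (a : ℝ) :
    a < starDisc x ↔ ∃ q : Fin d → ℚ, (fun j => (q j : ℝ)) ∈ Icc (0 : Fin d → ℝ) 1 ∧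
      a < |locDisc x fun j => (q j : ℝ)| := by
  constructor
  · intro h
    obtain ⟨v, ⟨t, ht, rfl⟩, hv⟩ := (lt_csSup_iff (starDisc_bddAbove x) (starDisc_nonempty x)).1 h
    have hcont : ∀ᶠ s in nhds t, a < |(∏ j, s j) -
      ((Finset.univ.filter fun i : Fin n => ∀ j, 0 ≤ x i j ∧ x i j < t j).card : ℝ) / n| := by
      have hc : Continuous fun s : Fin d → ℝ => |(∏ j, s j) -
        ((Finset.univ.filter fun i : Fin n => ∀ j, 0 ≤ x i j ∧ x i j < t j).card : ℝ) / n| := by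
        fun_prop
      exact hc.continuousAt.eventually_const_lt hv
    obtain ⟨e, he, hball⟩ := Metric.eventually_nhds_iff.1 hcont
    have hq : ∀ j, ∃ q : ℚ, |(q : ℝ) - t j| < e ∧ 0 ≤ (q : ℝ) ∧ (q : ℝ) ≤ t j ∧
        ∀ i, (0 ≤ x i j ∧ x i j < q ↔ 0 ≤ x i j ∧ x i j < t j) := by
      intro j
      rcases (ht.1 j).eq_or_lt with h0 | h0
      · refine ⟨0, ?_⟩
        have h0' : t j = 0 := h0.symm
        simp [h0', he]
      · have h0' : 0 < t j := h0
        have hev : ∀ᶠ y in nhdsWithin (t j) (Iio (t j)),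
            t j - e < y ∧ 0 < y ∧ ∀ i, x i j < t j → x i j < y := by
          refine (eventually_nhdsWithin_of_eventually_nhds
            (eventually_gt_nhds (by linarith))).and
            ((eventually_nhdsWithin_of_eventually_nhds (eventually_gt_nhds h0')).and ?_)
          rw [Filter.eventually_all]
          intro i
          by_cases hi : x i j < t j
          · filter_upwards [eventually_nhdsWithin_of_eventually_nhds (eventually_gt_nhds hi)]
              with y hy _ using hy
          · exact Filter.Eventually.of_forall fun y h => absurd h hi
        obtain ⟨l, hl, hsub⟩ := mem_nhdsLT_iff_exists_Ioo_subset.1 hev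
        obtain ⟨q, hq1, hq2⟩ := exists_rat_btwn (show l < t j from hl)
        obtain ⟨k1, k2, k3⟩ := hsub ⟨hq1, hq2⟩
        refine ⟨q, ?_, k2.le, hq2.le, fun i => ⟨fun h => ⟨h.1, h.2.trans hq2⟩,
          fun h => ⟨h.1, k3 i h.2⟩⟩⟩
        rw [abs_lt]; constructor <;> linarith
    choose q hq1 hq2 hq3 hq4 using hq
    refine ⟨q, ⟨fun j => hq2 j, fun j => (hq3 j).trans (ht.2 j)⟩, ?_⟩
    have := hball (y := fun j => (q j : ℝ)) (by
      rw [dist_pi_lt_iff he]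
      exact fun j => by rw [Real.dist_eq]; exact hq1 j)
    simp only [locDisc, hq4]
    exact this
  · rintro ⟨q, hq, h⟩
    exact h.trans_le (abs_locDisc_le_starDisc x hq)

lemma measurable_locDisc {d n : ℕ} (t : Fin d → ℝ) :
    Measurable fun x : Fin n → Fin d → ℝ => locDisc x t := by
  unfold locDisc
  simp_rw [Finset.card_filter]
  push_cast
  refine measurable_const.sub (Measurable.div_const ?_ _)
  refine Finset.measurable_sum _ fun i _ => ?_
  refine Measurable.ite ?_ measurable_const measurable_const
  measurability

lemma measurable_starDisc {d n : ℕ} :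
    Measurable fun x : Fin n → Fin d → ℝ => starDisc x := by
  refine measurable_of_Ioi fun a => ?_
  have : (fun x : Fin n → Fin d → ℝ => starDisc x) ⁻¹' Ioi a =
      ⋃ q ∈ {q : Fin d → ℚ | (fun j => (q j : ℝ)) ∈ Icc (0 : Fin d → ℝ) 1},
        {x : Fin n → Fin d → ℝ | a < |locDisc x fun j => (q j : ℝ)|} := by
    ext x
    simp only [mem_preimage, mem_Ioi, lt_starDisc_iff, mem_iUnion, mem_ofPred_eq, exists_prop]
  rw [this]
  refine MeasurableSet.biUnion (Set.to_countable _) fun q _ => ?_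
  exact measurableSet_lt measurable_const (measurable_locDisc _).abs

lemma restrict_Icc_eq_pi (d : ℕ) : volume.restrict (Icc (0 : Fin d → ℝ) 1) =
    Measure.pi fun _ : Fin d => volume.restrict (Ico (0 : ℝ) 1) := by
  rw [← Measure.restrict_pi_pi, ← volume_pi]
  refine Measure.restrict_congr_set ?_
  exact (Measure.univ_pi_Ico_ae_eq_Icc (μ := fun _ : Fin d => (volume : Measure ℝ))
    (f := (0 : Fin d → ℝ)) (g := 1)).symm

instance isProb_Ico : IsProbabilityMeasure (volume.restrict (Ico (0 : ℝ) 1)) :=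
  ⟨by simp⟩

instance isProb_Icc (d : ℕ) : IsProbabilityMeasure (volume.restrict (Icc (0 : Fin d → ℝ) 1)) := by
  rw [restrict_Icc_eq_pi]; infer_instance

lemma integrable_starDisc (d n : ℕ) : Integrable (fun x : Fin n → Fin d → ℝ => starDisc x)
    (Measure.pi fun _ : Fin n => volume.restrict (Set.Icc (0 : Fin d → ℝ) 1)) := by
  refine Integrable.of_bound measurable_starDisc.aestronglyMeasurable 1 ?_
  refine Filter.Eventually.of_forall fun x => ?_
  rw [Real.norm_of_nonneg (starDisc_nonneg x)]
  exact starDisc_le x fun t ht => abs_locDisc_le_one x ht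

/-! ### Rows of independent bits -/

/-- Mass of a single bit: `true` has probability `1 - δ`. -/
noncomputable def bitW (δ : ℝ) (b : Bool) : ℝ := if b then 1 - δ else δ

/-- Mass of a row of independent bits. -/
noncomputable def rowW (δ : ℝ) {n : ℕ} (r : Fin n → Bool) : ℝ := ∏ i, bitW δ (r i)

lemma bitW_nonneg {δ : ℝ} (h0 : 0 ≤ δ) (h1 : δ ≤ 1 / 2) (b : Bool) : 0 ≤ bitW δ b := by
  unfold bitW; split_ifs <;> linarith

lemma rowW_nonneg {δ : ℝ} (h0 : 0 ≤ δ) (h1 : δ ≤ 1 / 2) {n : ℕ} (r : Fin n → Bool) :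
    0 ≤ rowW δ r := Finset.prod_nonneg fun _ _ => bitW_nonneg h0 h1 _

lemma sum_rowW (δ : ℝ) {n : ℕ} : ∑ r : Fin n → Bool, rowW δ r = 1 := by
  unfold rowW
  rw [← Fintype.prod_sum (fun (_ : Fin n) b => bitW δ b)]
  simp [bitW]

/-- The number of `true` bits of `r` inside `S` minus its mean `(1 - δ) |S|`, written as a sum of
independent centred terms. -/
noncomputable def excess (δ : ℝ) {n : ℕ} (S : Finset (Fin n)) (r : Fin n → Bool) : ℝ :=
  ∑ i ∈ S, if r i then δ else δ - 1

lemma sum_rowW_excess (δ : ℝ) {n : ℕ} (S : Finset (Fin n)) :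
    ∑ r : Fin n → Bool, rowW δ r * excess δ S r = 0 := by
  unfold excess
  simp_rw [Finset.mul_sum]
  rw [Finset.sum_comm]
  refine Finset.sum_eq_zero fun k _ => ?_
  have h : ∀ r : Fin n → Bool, rowW δ r * (if r k then δ else δ - 1) =
      ∏ i, bitW δ (r i) * (if i = k then (if r i then δ else δ - 1) else 1) := by
    intro r
    rw [Finset.prod_mul_distrib, rowW]
    congr 1
    simp
  simp_rw [h]
  rw [← Fintype.prod_sum (fun (i : Fin n) b =>
    bitW δ b * (if i = k then (if b = true then δ else δ - 1) else 1))]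
  refine Finset.prod_eq_zero (Finset.mem_univ k) ?_
  simp [bitW]
  ring

lemma one_sub_cos_le_abs (x : ℝ) : 1 - Real.cos x ≤ |x| := by
  have h1 := Real.one_sub_sq_div_two_le_cos (x := x)
  have h2 := Real.neg_one_le_cos x
  rcases le_total |x| 2 with h | h
  · have : x ^ 2 = |x| ^ 2 := (sq_abs x).symm
    nlinarith [abs_nonneg x]
  · linarith

/-- The characteristic function of `excess` is a power of that of one centred bit. -/
lemma sum_rowW_cexp (δ l : ℝ) {n : ℕ} (S : Finset (Fin n)) :
    ∑ r : Fin n → Bool, (rowW δ r : ℂ) * Complex.exp ((l * excess δ S r : ℝ) * Complex.I) =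
      ((1 - δ : ℝ) * Complex.exp ((l * δ : ℝ) * Complex.I) +
        (δ : ℝ) * Complex.exp ((l * (δ - 1) : ℝ) * Complex.I)) ^ S.card := by
  have h : ∀ r : Fin n → Bool,
      (rowW δ r : ℂ) * Complex.exp ((l * excess δ S r : ℝ) * Complex.I) =
      ∏ i, (bitW δ (r i) : ℂ) *
        (if i ∈ S then Complex.exp ((l * (if r i then δ else δ - 1) : ℝ) * Complex.I) else 1) := by
    intro r
    rw [Finset.prod_mul_distrib, rowW]
    push_cast
    congr 1
    rw [Finset.prod_ite_mem, Finset.univ_inter, ← Complex.exp_sum, excess]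
    congr 1
    push_cast
    rw [Finset.mul_sum, Finset.sum_mul]
  simp_rw [h]
  rw [← Fintype.prod_sum (fun (i : Fin n) b => (bitW δ b : ℂ) *
        (if i ∈ S then Complex.exp ((l * (if b = true then δ else δ - 1) : ℝ) * Complex.I) else 1))]
  have h2 : ∀ i : Fin n, (∑ b : Bool, (bitW δ b : ℂ) *
        (if i ∈ S then Complex.exp ((l * (if b = true then δ else δ - 1) : ℝ) * Complex.I) else 1))
      = if i ∈ S then ((1 - δ : ℝ) * Complex.exp ((l * δ : ℝ) * Complex.I) +
        (δ : ℝ) * Complex.exp ((l * (δ - 1) : ℝ) * Complex.I)) else 1 := by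
    intro i
    by_cases hi : i ∈ S <;> simp [hi, bitW]
  simp_rw [h2]
  rw [Finset.prod_ite_mem, Finset.univ_inter, Finset.prod_const]

lemma normSq_charFun (δ l : ℝ) :
    ‖((1 - δ : ℝ) * Complex.exp ((l * δ : ℝ) * Complex.I) +
        (δ : ℝ) * Complex.exp ((l * (δ - 1) : ℝ) * Complex.I))‖ ^ 2
      = 1 - 2 * δ * (1 - δ) * (1 - Real.cos l) := by
  rw [Complex.sq_norm, Complex.normSq_apply]
  have e1 : l * (δ - 1) = l * δ - l := by ring
  simp only [Complex.add_re, Complex.add_im, Complex.re_ofReal_mul, Complex.im_ofReal_mul,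
    Complex.exp_ofReal_mul_I_re, Complex.exp_ofReal_mul_I_im, e1, Real.cos_sub, Real.sin_sub]
  have := Real.sin_sq_add_cos_sq l
  have := Real.sin_sq_add_cos_sq (l * δ)
  generalize Real.sin l = a at *
  generalize Real.cos l = b at *
  generalize Real.sin (l * δ) = p at *
  generalize Real.cos (l * δ) = q at *
  have h1 : a ^ 2 = 1 - b ^ 2 := by linarith
  have h2 : p ^ 2 = 1 - q ^ 2 := by linarith
  ring_nf
  simp only [h1, h2]
  ring

/-- First absolute moment of a centred binomial variable, bounded below through its characteristic
function at `l = 1 / (2 √(|S| δ))` by means of `1 - cos x ≤ |x|`. -/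
lemma sum_rowW_abs {δ : ℝ} (h0 : 0 < δ) (h1 : δ ≤ 1 / 2) {n : ℕ} (S : Finset (Fin n))
    (hS : 1 / 4 ≤ S.card * δ) :
    2 * (1 - Real.exp (-(1 / 64))) * Real.sqrt (S.card * δ) ≤
      ∑ r : Fin n → Bool, rowW δ r * |excess δ S r| := by
  set m : ℝ := (S.card : ℝ) with hm
  set q := Real.sqrt (m * δ) with hq
  have hmd : 0 < m * δ := by linarith
  have hqq : q ^ 2 = m * δ := Real.sq_sqrt hmd.le
  have hq0 : 1 / 2 ≤ q := Real.le_sqrt_of_sq_le (by norm_num; linarith)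
  have hm0 : 0 < m := by
    by_contra h
    nlinarith
  set l := 1 / (2 * q) with hl
  have hl0 : 0 < l := by positivity
  have hl1 : l ≤ 1 := by rw [hl, div_le_one (by positivity)]; linarith
  have hl2 : l ^ 2 * (m * δ) = 1 / 4 := by rw [← hqq, hl]; field_simp; norm_num
  set φ := ((1 - δ : ℝ) * Complex.exp ((l * δ : ℝ) * Complex.I) +
        (δ : ℝ) * Complex.exp ((l * (δ - 1) : ℝ) * Complex.I)) with hφ
  have hcos : Real.cos l ≤ 1 - l ^ 2 / 8 := by
    have h := Real.cos_le_one_sub_mul_cos_sq (x := l)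
      (by rw [abs_of_pos hl0]; linarith [Real.pi_gt_three])
    have : (1 : ℝ) / 8 ≤ 2 / Real.pi ^ 2 := by
      rw [div_le_div_iff₀ (by norm_num) (by positivity)]
      nlinarith [Real.pi_le_four, Real.pi_pos]
    nlinarith [sq_nonneg l]
  have hnorm : ‖φ‖ ≤ Real.exp (-(1 / (64 * m))) := by
    have e : ‖φ‖ ^ 2 ≤ Real.exp (-(1 / (64 * m))) ^ 2 := by
      rw [hφ, normSq_charFun, ← Real.exp_nat_mul]
      have h2 := Real.add_one_le_exp (-(1 / (32 * m)))
      have h3 : ((2 : ℕ) : ℝ) * (-(1 / (64 * m))) = -(1 / (32 * m)) := by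
        push_cast; field_simp; norm_num
      rw [h3]
      have h4 : 1 / (32 * m) = δ * l ^ 2 / 8 := by
        rw [div_eq_iff (by positivity)]; nlinarith
      have h5 : δ * (l ^ 2 / 8) ≤ 2 * δ * (1 - δ) * (1 - Real.cos l) := by
        have : δ * 1 ≤ 2 * δ * (1 - δ) := by nlinarith
        have h6 : l ^ 2 / 8 ≤ 1 - Real.cos l := by linarith
        nlinarith [sq_nonneg l]
      linarith
    exact (pow_le_pow_iff_left₀ (norm_nonneg _) (Real.exp_pos _).le two_ne_zero).1 e
  have hpow : ‖φ ^ S.card‖ ≤ Real.exp (-(1 / 64)) := by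
    rw [norm_pow]
    calc ‖φ‖ ^ S.card ≤ Real.exp (-(1 / (64 * m))) ^ S.card := by gcongr
      _ = Real.exp (-(1 / 64)) := by
        rw [← Real.exp_nat_mul, ← hm]; congr 1; field_simp
  have hcs : ∑ r : Fin n → Bool, rowW δ r * Real.cos (l * excess δ S r) ≤ Real.exp (-(1 / 64)) := by
    have h := sum_rowW_cexp δ l S
    have h' := congrArg Complex.re h
    rw [Complex.re_sum] at h'
    simp only [Complex.re_ofReal_mul, Complex.exp_ofReal_mul_I_re] at h'
    rw [h']
    exact (Complex.re_le_norm _).trans hpow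
  have hmain : 1 - Real.exp (-(1 / 64)) ≤ l * ∑ r : Fin n → Bool, rowW δ r * |excess δ S r| := by
    calc 1 - Real.exp (-(1 / 64)) ≤
        ∑ r : Fin n → Bool, rowW δ r * (1 - Real.cos (l * excess δ S r)) := by
          simp_rw [mul_sub, mul_one]
          rw [Finset.sum_sub_distrib, sum_rowW]
          linarith
      _ ≤ ∑ r : Fin n → Bool, rowW δ r * (l * |excess δ S r|) := by
          gcongr with r
          · exact rowW_nonneg h0.le h1 r
          · have := one_sub_cos_le_abs (l * excess δ S r)
            rwa [abs_mul, abs_of_pos hl0] at this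
      _ = _ := by
          rw [Finset.mul_sum]; congr 1; ext r; ring
  have : (2 * q) * (1 - Real.exp (-(1 / 64))) ≤
      (2 * q) * (l * ∑ r : Fin n → Bool, rowW δ r * |excess δ S r|) := by gcongr
  rw [← mul_assoc, hl, mul_one_div_cancel (by positivity), one_mul] at this
  linarith

lemma sum_rowW_posPart {δ : ℝ} (h0 : 0 < δ) (h1 : δ ≤ 1 / 2) {n : ℕ} (S : Finset (Fin n))
    (hS : 1 / 4 ≤ S.card * δ) :
    (1 - Real.exp (-(1 / 64))) * Real.sqrt (S.card * δ) ≤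
      ∑ r : Fin n → Bool, rowW δ r * max (excess δ S r) 0 := by
  have h := sum_rowW_abs h0 h1 S hS
  have h2 := sum_rowW_excess δ S
  have h3 : ∑ r : Fin n → Bool, rowW δ r * max (excess δ S r) 0 =
      ((∑ r : Fin n → Bool, rowW δ r * |excess δ S r|) +
        ∑ r : Fin n → Bool, rowW δ r * excess δ S r) / 2 := by
    rw [← Finset.sum_add_distrib, Finset.sum_div]
    congr 1; ext r
    rcases le_total (excess δ S r) 0 with h | h
    · rw [max_eq_right h, abs_of_nonpos h]; ring
    · rw [max_eq_left h, abs_of_nonneg h]; ring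
  rw [h3, h2]; linarith

/-! ### Greedy choice of a box -/

/-- The greedy choice of cuts. Given the current set `S` of surviving points, column `0` is cut
(that is, only the points with bit `true` in it are kept) exactly when at least the expected
proportion `1 - δ` of `S` survives. The value is the number of points that survive all columns
divided by the product of the factors `1 - δ` of the columns that were cut. -/
noncomputable def greedy (δ : ℝ) {n : ℕ} :
    (k : ℕ) → Finset (Fin n) → (Fin k → Fin n → Bool) → ℝ
  | 0, S, _ => S.card
  | k + 1, S, M =>
      if (1 - δ) * S.card ≤ ((S.filter fun i => M 0 i = true).card : ℝ) then
        greedy δ k (S.filter fun i => M 0 i = true) (fun j => M j.succ) / (1 - δ)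
      else greedy δ k S (fun j => M j.succ)

lemma greedy_eq (δ : ℝ) {n : ℕ} (k : ℕ) (S : Finset (Fin n)) (M : Fin k → Fin n → Bool) :
    ∃ η : Finset (Fin k), greedy δ k S M =
      ((S.filter fun i => ∀ j ∈ η, M j i = true).card : ℝ) / (1 - δ) ^ η.card := by
  induction k generalizing S with
  | zero => exact ⟨∅, by simp [greedy]⟩
  | succ k ih =>
    rw [greedy]
    split_ifs with h
    · obtain ⟨η, hη⟩ := ih (S.filter fun i => M 0 i = true) (fun j => M j.succ)
      refine ⟨insert 0 (η.map (Fin.succEmb k)), ?_⟩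
      have h0 : (0 : Fin (k + 1)) ∉ η.map (Fin.succEmb k) := by simp [Fin.succ_ne_zero]
      rw [hη, Finset.card_insert_of_notMem h0, Finset.card_map, pow_succ, div_div,
        Finset.filter_filter]
      simp
    · obtain ⟨η, hη⟩ := ih S (fun j => M j.succ)
      refine ⟨η.map (Fin.succEmb k), ?_⟩
      rw [hη, Finset.card_map]
      simp

lemma le_greedy {δ : ℝ} (h1 : δ ≤ 1 / 2) {n : ℕ} (k : ℕ) (S : Finset (Fin n))
    (M : Fin k → Fin n → Bool) : (S.card : ℝ) ≤ greedy δ k S M := by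
  induction k generalizing S with
  | zero => simp [greedy]
  | succ k ih =>
    rw [greedy]
    split_ifs with h
    · rw [le_div_iff₀ (by linarith)]
      have := ih (S.filter fun i => M 0 i = true) (fun j => M j.succ)
      linarith
    · exact ih _ _

lemma excess_eq (δ : ℝ) {n : ℕ} (S : Finset (Fin n)) (r : Fin n → Bool) :
    excess δ S r = ((S.filter fun i => r i = true).card : ℝ) - (1 - δ) * S.card := by
  unfold excess
  have : ∀ i, (if r i = true then δ else δ - 1) = (if r i = true then (1 : ℝ) else 0) - (1 - δ) := by
    intro i; split_ifs <;> ring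
  simp_rw [this]
  rw [Finset.sum_sub_distrib, Finset.sum_const, Finset.sum_boole, nsmul_eq_mul]
  ring

lemma sum_matrix_succ {T : Type*} [Fintype T] {k : ℕ} (f : (Fin (k + 1) → T) → ℝ) :
    ∑ M : Fin (k + 1) → T, f M = ∑ r : T, ∑ M : Fin k → T, f (Fin.cons r M) := by
  rw [← (Fin.consEquiv fun _ : Fin (k + 1) => T).sum_comp, Fintype.sum_prod_type]
  rfl

lemma sum_matrixW (δ : ℝ) {n : ℕ} (k : ℕ) :
    ∑ M : Fin k → Fin n → Bool, ∏ j, rowW δ (M j) = 1 := by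
  rw [← Fintype.prod_sum (fun (_ : Fin k) (r : Fin n → Bool) => rowW δ r)]
  simp [sum_rowW]

/-- Each column raises the expected value of `greedy` by at least the expected positive part of a
centred binomial variable; `H` is a lower bound for the number of points that can ever remain. -/
lemma sum_greedy {δ H : ℝ} (h0 : 0 < δ) (h1 : δ ≤ 1 / 2) (hH : 1 / 4 ≤ H * δ) {n : ℕ} (k : ℕ)
    (S : Finset (Fin n)) (hS : H ≤ S.card * (1 - δ) ^ k) :
    S.card + k * ((1 - Real.exp (-(1 / 64))) * Real.sqrt (H * δ)) ≤
      ∑ M : Fin k → Fin n → Bool, (∏ j, rowW δ (M j)) * greedy δ k S M := by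
  have hH0 : 0 < H := by
    by_contra h; nlinarith
  have hc : 0 ≤ 1 - Real.exp (-(1 / 64)) := by
    have := Real.exp_le_one_iff.2 (show (-(1 / 64) : ℝ) ≤ 0 by norm_num); linarith
  set A := (1 - Real.exp (-(1 / 64))) * Real.sqrt (H * δ) with hA
  have hA0 : 0 ≤ A := by positivity
  induction k generalizing S with
  | zero => simp [greedy]
  | succ k ih =>
    have hk1 : (1 - δ) ^ (k + 1) ≤ 1 := pow_le_one₀ (by linarith) (by linarith)
    have hHS : H ≤ S.card := by
      have : (0 : ℝ) ≤ S.card := by positivity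
      nlinarith
    have hpos : A ≤ ∑ r : Fin n → Bool, rowW δ r * max (excess δ S r) 0 := by
      refine le_trans ?_ (sum_rowW_posPart h0 h1 S (by nlinarith))
      rw [hA]; gcongr
    rw [sum_matrix_succ]
    have hrow : ∀ r : Fin n → Bool, rowW δ r * (S.card + k * A + max (excess δ S r) 0) ≤
        ∑ M : Fin k → Fin n → Bool,
          (∏ j : Fin (k + 1), rowW δ ((Fin.cons r M : Fin (k + 1) → Fin n → Bool) j)) *
            greedy δ (k + 1) S (Fin.cons r M : Fin (k + 1) → Fin n → Bool) := by
      intro r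
      simp_rw [Fin.prod_univ_succ, Fin.cons_zero, Fin.cons_succ, mul_assoc]
      rw [← Finset.mul_sum]
      refine mul_le_mul_of_nonneg_left ?_ (rowW_nonneg h0.le h1 r)
      simp_rw [greedy, Fin.cons_zero, Fin.cons_succ]
      have hd : 0 < 1 - δ := by linarith
      split_ifs with h
      · have hS' : H ≤ (S.filter fun i => r i = true).card * (1 - δ) ^ k := by
          refine hS.trans ?_
          rw [pow_succ, mul_comm ((1 - δ) ^ k), ← mul_assoc, mul_comm (S.card : ℝ)]
          gcongr
        have := ih _ hS'
        simp_rw [← mul_div_assoc]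
        rw [← Finset.sum_div, le_div_iff₀ hd]
        refine le_trans ?_ this
        rw [excess_eq, max_eq_left (by linarith)]
        have : 0 ≤ δ * (k * A) := by positivity
        nlinarith
      · have hS' : H ≤ S.card * (1 - δ) ^ k := by
          refine hS.trans ?_
          gcongr ?_ * ?_
          exact pow_le_pow_of_le_one hd.le (by linarith) (Nat.le_succ k)
        refine le_trans ?_ (ih S hS')
        rw [excess_eq, max_eq_right (by push Not at h; linarith)]
        linarith
    refine le_trans ?_ (Finset.sum_le_sum fun r _ => hrow r)
    simp_rw [mul_add]
    rw [Finset.sum_add_distrib, Finset.sum_add_distrib, ← Finset.sum_mul, ← Finset.sum_mul,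
      sum_rowW]
    push_cast
    linarith

/-! ### The lower bound -/

/-- The matrix recording which coordinates of the points lie below `1 - δ`, one row of bits for
each coordinate direction. -/
noncomputable def bits (δ : ℝ) {d n : ℕ} (X : Fin n → Fin d → ℝ) : Fin d → Fin n → Bool :=
  fun j i => decide (X i j < 1 - δ)

lemma measurable_bits (δ : ℝ) {d n : ℕ} :
    Measurable (bits δ : (Fin n → Fin d → ℝ) → Fin d → Fin n → Bool) := by
  refine measurable_pi_lambda _ fun j => measurable_pi_lambda _ fun i => ?_
  refine measurable_to_bool ?_
  have : (fun X : Fin n → Fin d → ℝ => bits δ X j i) ⁻¹' {true} = {X | X i j < 1 - δ} := by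
    ext X; simp [bits]
  rw [this]
  exact measurableSet_lt (by fun_prop) measurable_const

lemma measure_bit {δ : ℝ} (h0 : 0 ≤ δ) (h1 : δ ≤ 1 / 2) (b : Bool) :
    volume.restrict (Ico (0 : ℝ) 1) {y | decide (y < 1 - δ) = b} = ENNReal.ofReal (bitW δ b) := by
  have hm : MeasurableSet {y : ℝ | decide (y < 1 - δ) = b} := by
    cases b
    · have : {y : ℝ | decide (y < 1 - δ) = false} = Ici (1 - δ) := by ext y; simp
      rw [this]; exact measurableSet_Ici
    · have : {y : ℝ | decide (y < 1 - δ) = true} = Iio (1 - δ) := by ext y; simp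
      rw [this]; exact measurableSet_Iio
  rw [Measure.restrict_apply hm]
  cases b
  · have : {y : ℝ | decide (y < 1 - δ) = false} ∩ Ico 0 1 = Ico (1 - δ) 1 := by
      ext y; simp; intro _ _; linarith
    rw [this, Real.volume_Ico]; simp [bitW]
  · have : {y : ℝ | decide (y < 1 - δ) = true} ∩ Ico 0 1 = Ico 0 (1 - δ) := by
      ext y; simp
      constructor
      · rintro ⟨a, b, c⟩; exact ⟨b, a⟩
      · rintro ⟨a, b⟩; exact ⟨b, a, by linarith⟩
    rw [this, Real.volume_Ico]; simp [bitW]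

lemma measure_bits {δ : ℝ} (h0 : 0 ≤ δ) (h1 : δ ≤ 1 / 2) {d n : ℕ} (M : Fin d → Fin n → Bool) :
    ((Measure.pi fun _ : Fin n => volume.restrict (Set.Icc (0 : Fin d → ℝ) 1)).map
      (bits δ)).real {M} = ∏ j, rowW δ (M j) := by
  have hpre : (bits δ : (Fin n → Fin d → ℝ) → _) ⁻¹' {M} =
      univ.pi fun i => univ.pi fun j => {y : ℝ | decide (y < 1 - δ) = M j i} := by
    ext X
    simp only [mem_preimage, mem_singleton_iff, mem_univ_pi, mem_ofPred_eq]
    constructor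
    · rintro rfl i j; rfl
    · intro h; ext j i; exact h i j
  rw [measureReal_def, Measure.map_apply (measurable_bits δ) (measurableSet_singleton M), hpre,
    Measure.pi_pi]
  simp_rw [restrict_Icc_eq_pi, Measure.pi_pi, measure_bit h0 h1]
  rw [ENNReal.toReal_prod]
  simp_rw [ENNReal.toReal_prod, ENNReal.toReal_ofReal (bitW_nonneg h0 h1 _)]
  rw [Finset.prod_comm]
  rfl

lemma ae_mem_Ico (d n : ℕ) :
    ∀ᵐ X ∂(Measure.pi fun _ : Fin n => volume.restrict (Set.Icc (0 : Fin d → ℝ) 1)),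
      ∀ i j, X i j ∈ Ico (0 : ℝ) 1 := by
  rw [Filter.eventually_all]
  intro i
  have h : ∀ᵐ x ∂(volume.restrict (Set.Icc (0 : Fin d → ℝ) 1)), ∀ j, x j ∈ Ico (0 : ℝ) 1 := by
    rw [restrict_Icc_eq_pi, Filter.eventually_all]
    intro j
    exact Measure.tendsto_eval_ae_ae.eventually (ae_restrict_mem measurableSet_Ico)
  exact (Measure.tendsto_eval_ae_ae
    (μ := fun _ : Fin n => volume.restrict (Set.Icc (0 : Fin d → ℝ) 1)) (i := i)).eventually h

/-- The greedy cuts define the box with side `1 - δ` in the cut directions and `1` in the others.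
Its volume is at least `(1 - δ) ^ d ≥ 1 / 2`, so its surplus of points is at least half the surplus
of `greedy` over `n`. -/
lemma greedy_le_starDisc {d n : ℕ} (hd : 1 ≤ d) (hn : d ≤ n) {δ : ℝ}
    (hδ : δ = 1 / (2 * d)) (X : Fin n → Fin d → ℝ) (hX : ∀ i j, X i j ∈ Ico (0 : ℝ) 1) :
    (greedy δ d Finset.univ (bits δ X) - n) / (2 * n) ≤ starDisc X := by
  have hd' : (1 : ℝ) ≤ d := by exact_mod_cast hd
  have hn' : (0 : ℝ) < n := by exact_mod_cast (by omega : 0 < n)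
  have h0 : 0 < δ := by rw [hδ]; positivity
  have h1 : δ ≤ 1 / 2 := by
    rw [hδ]; gcongr; linarith
  have hdd : (d : ℝ) * δ = 1 / 2 := by rw [hδ]; field_simp
  have hg := le_greedy h1 d Finset.univ (bits δ X)
  obtain ⟨η, hη⟩ := greedy_eq δ d Finset.univ (bits δ X)
  set g := greedy δ d Finset.univ (bits δ X)
  rw [Finset.card_univ, Fintype.card_fin] at hg
  have hV0 : 0 < (1 - δ) ^ η.card := pow_pos (by linarith) _
  have hV : 1 / 2 ≤ (1 - δ) ^ η.card := by
    calc (1 : ℝ) / 2 = 1 + d * (-δ) := by linarith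
      _ ≤ (1 + -δ) ^ d := one_add_mul_le_pow (by linarith) d
      _ = (1 - δ) ^ d := by rw [sub_eq_add_neg]
      _ ≤ (1 - δ) ^ η.card := pow_le_pow_of_le_one (by linarith) (by linarith)
          (by simpa using Finset.card_le_univ η)
  have ht : (fun j => if j ∈ η then 1 - δ else 1 : Fin d → ℝ) ∈ Icc (0 : Fin d → ℝ) 1 := by
    constructor
    · intro j; dsimp; split_ifs <;> linarith
    · intro j; dsimp; split_ifs <;> linarith
  refine le_trans ?_ (abs_locDisc_le_starDisc X ht)
  have hloc : locDisc X (fun j => if j ∈ η then 1 - δ else 1) =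
      (1 - δ) ^ η.card * (n - g) / n := by
    have hcard : (Finset.univ.filter fun i : Fin n =>
        ∀ j, 0 ≤ X i j ∧ X i j < if j ∈ η then 1 - δ else 1) =
        Finset.univ.filter fun i => ∀ j ∈ η, bits δ X j i = true := by
      ext i
      simp only [Finset.mem_filter, Finset.mem_univ, true_and, bits, decide_eq_true_eq]
      constructor
      · intro h j hj; simpa [hj] using (h j).2
      · intro h j
        refine ⟨(hX i j).1, ?_⟩
        split_ifs with hj
        · exact h j hj
        · exact (hX i j).2
    rw [locDisc, hcard, Finset.prod_ite_mem, Finset.univ_inter, Finset.prod_const, hη]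
    field_simp
  rw [hloc, abs_div, abs_of_pos hn', abs_mul, abs_of_pos hV0, abs_of_nonpos (by linarith),
    div_le_div_iff₀ (by positivity) hn']
  nlinarith [mul_nonneg (sub_nonneg.2 hV) (sub_nonneg.2 hg)]

lemma lower_bound {d n : ℕ} (hd : 1 ≤ d) (hn : d ≤ n) :
    (1 - Real.exp (-(1 / 64))) / 4 * Real.sqrt (d / n) ≤
        (∫ X : Fin n → Fin d → ℝ, starDisc X
          ∂(Measure.pi fun _ : Fin n => volume.restrict (Set.Icc (0 : Fin d → ℝ) 1))) := by
  have hd' : (1 : ℝ) ≤ d := by exact_mod_cast hd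
  have hnd : (d : ℝ) ≤ n := by exact_mod_cast hn
  have hn' : (0 : ℝ) < n := by linarith
  set μ := (Measure.pi fun _ : Fin n => volume.restrict (Set.Icc (0 : Fin d → ℝ) 1)) with hμ
  obtain ⟨δ, hδ⟩ : ∃ δ : ℝ, δ = 1 / (2 * d) := ⟨_, rfl⟩
  have h0 : 0 < δ := by rw [hδ]; positivity
  have h1 : δ ≤ 1 / 2 := by
    rw [hδ]; gcongr; linarith
  have hdd : (d : ℝ) * δ = 1 / 2 := by rw [hδ]; field_simp
  set f : (Fin d → Fin n → Bool) → ℝ := fun M => (greedy δ d Finset.univ M - n) / (2 * n) with hf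
  have hint : ∫ X, f (bits δ X) ∂μ = ∑ M, (∏ j, rowW δ (M j)) * f M := by
    have e : ∫ M, f M ∂(μ.map (bits δ)) = ∫ X, f (bits δ X) ∂μ :=
      integral_map (measurable_bits δ).aemeasurable
        (measurable_of_finite f).aestronglyMeasurable
    have : IsProbabilityMeasure (μ.map (bits δ)) :=
      Measure.isProbabilityMeasure_map (measurable_bits δ).aemeasurable
    rw [← e, integral_fintype Integrable.of_finite]
    refine Finset.sum_congr rfl fun M _ => ?_
    rw [hμ, measure_bits h0.le h1, smul_eq_mul]
  have hle : ∫ X, f (bits δ X) ∂μ ≤ ∫ X, starDisc X ∂μ := by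
    refine integral_mono_ae ?_ (integrable_starDisc d n) ?_
    · refine Integrable.comp_measurable (g := f) ?_ (measurable_bits δ)
      have : IsProbabilityMeasure (μ.map (bits δ)) :=
        Measure.isProbabilityMeasure_map (measurable_bits δ).aemeasurable
      exact (Integrable.of_finite : Integrable f (μ.map (bits δ)))
    · filter_upwards [ae_mem_Ico d n] with X hX
      exact greedy_le_starDisc hd hn hδ X hX
  refine le_trans ?_ hle
  rw [hint]
  have hsum : ∑ M, (∏ j, rowW δ (M j)) * f M =
      ((∑ M : Fin d → Fin n → Bool, (∏ j, rowW δ (M j)) * greedy δ d Finset.univ M) - n)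
        / (2 * n) := by
    have : ∀ M : Fin d → Fin n → Bool, (∏ j, rowW δ (M j)) * f M =
        ((∏ j, rowW δ (M j)) * greedy δ d Finset.univ M - (∏ j, rowW δ (M j)) * n) / (2 * n) := by
      intro M; rw [hf]; ring
    simp_rw [this]
    rw [← Finset.sum_div, Finset.sum_sub_distrib, ← Finset.sum_mul, sum_matrixW, one_mul]
  rw [hsum]
  have hpow : 1 / 2 ≤ (1 - δ) ^ d := by
    calc (1 : ℝ) / 2 = 1 + d * (-δ) := by linarith
      _ ≤ (1 + -δ) ^ d := one_add_mul_le_pow (by linarith) d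
      _ = (1 - δ) ^ d := by rw [sub_eq_add_neg]
  have hHδ : (n / 2 : ℝ) * δ = (n / d) / 4 := by rw [hδ]; field_simp; norm_num
  have hnd1 : 1 ≤ (n : ℝ) / d := by rw [le_div_iff₀ (by linarith)]; linarith
  have hkey := sum_greedy (n := n) (H := n / 2) h0 h1 (by rw [hHδ]; linarith) d Finset.univ (by
    rw [Finset.card_univ, Fintype.card_fin]
    nlinarith)
  rw [Finset.card_univ, Fintype.card_fin, hHδ] at hkey
  have hs : Real.sqrt (n / d / 4) = Real.sqrt (n / d) / 2 := by
    rw [Real.sqrt_div (by positivity), show (4 : ℝ) = 2 ^ 2 by norm_num, Real.sqrt_sq (by norm_num)]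
  rw [hs] at hkey
  rw [le_div_iff₀ (by positivity)]
  have hs2 : Real.sqrt (d / n) * n = d * Real.sqrt (n / d) := by
    have a1 : Real.sqrt (d / n) = Real.sqrt d / Real.sqrt n := Real.sqrt_div (by positivity) _
    have a2 : Real.sqrt (n / d) = Real.sqrt n / Real.sqrt d := Real.sqrt_div (by positivity) _
    have b1 : 0 < Real.sqrt d := Real.sqrt_pos.2 (by linarith)
    have b2 : 0 < Real.sqrt n := Real.sqrt_pos.2 hn'
    rw [a1, a2]
    nth_rewrite 2 [← Real.sq_sqrt hn'.le]
    nth_rewrite 2 [← Real.sq_sqrt (by linarith : (0 : ℝ) ≤ d)]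
    field_simp
  have e : (1 - Real.exp (-(1 / 64))) / 4 * Real.sqrt (d / n) * (2 * n) =
      d * ((1 - Real.exp (-(1 / 64))) * (Real.sqrt (n / d) / 2)) := by
    linear_combination (1 - Real.exp (-(1 / 64))) / 2 * hs2
  rw [e]; linarith

/-! ### A maximal inequality for counts -/

/-- Bernstein-type bound: for `|s| ≤ 1` the variance proxy is the measure of `A`. -/
lemma mgf_bound {E : Type*} [MeasurableSpace E] (ν : Measure E) [IsProbabilityMeasure ν]
    {A : Set E} (hA : MeasurableSet A) {s : ℝ} (hs : |s| ≤ 1) (n : ℕ) :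
    Integrable (fun X : Fin n → E => Real.exp (s * ∑ i, (A.indicator 1 (X i) - ν.real A)))
      (Measure.pi fun _ => ν) ∧
    ∫ X : Fin n → E, Real.exp (s * ∑ i, (A.indicator 1 (X i) - ν.real A)) ∂(Measure.pi fun _ => ν)
      ≤ Real.exp (n * ν.real A * s ^ 2) := by
  set p := ν.real A with hp
  have hp0 : 0 ≤ p := measureReal_nonneg
  have hprod : ∀ X : Fin n → E, Real.exp (s * ∑ i, (A.indicator 1 (X i) - p)) =
      ∏ i, Real.exp (s * (A.indicator 1 (X i) - p)) := by
    intro X; rw [Finset.mul_sum, Real.exp_sum]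
  have hform : ∀ x : E, Real.exp (s * (A.indicator 1 x - p)) =
      Real.exp (-(s * p)) + A.indicator (fun _ => Real.exp (-(s * p)) * (Real.exp s - 1)) x := by
    intro x
    by_cases hx : x ∈ A
    · simp only [indicator_of_mem hx, Pi.one_apply]
      rw [show s * (1 - p) = -(s * p) + s by ring, Real.exp_add]; ring
    · simp only [indicator_of_notMem hx]
      rw [add_zero]; congr 1; ring
  have hind : Integrable (A.indicator fun _ : E => Real.exp (-(s * p)) * (Real.exp s - 1)) ν :=
    (integrable_const _).indicator hA
  have hint1 : Integrable (fun x : E => Real.exp (s * (A.indicator 1 x - p))) ν := by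
    simp_rw [hform]
    exact (integrable_const _).add hind
  have hval : ∫ x : E, Real.exp (s * (A.indicator 1 x - p)) ∂ν ≤ Real.exp (p * s ^ 2) := by
    simp_rw [hform]
    rw [integral_add (integrable_const _) hind, integral_indicator_const _ hA, integral_const]
    simp only [probReal_univ, smul_eq_mul, one_mul]
    rw [← hp]
    have h1 := (abs_le.1 (Real.abs_exp_sub_one_sub_id_le hs)).2
    have h2 := Real.add_one_le_exp (p * (Real.exp s - 1))
    calc Real.exp (-(s * p)) + p * (Real.exp (-(s * p)) * (Real.exp s - 1))
        = Real.exp (-(s * p)) * (p * (Real.exp s - 1) + 1) := by ring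
      _ ≤ Real.exp (-(s * p)) * Real.exp (p * (Real.exp s - 1)) := by gcongr
      _ = Real.exp (p * (Real.exp s - 1 - s)) := by rw [← Real.exp_add]; congr 1; ring
      _ ≤ Real.exp (p * s ^ 2) := by gcongr
  constructor
  · simp_rw [hprod]
    exact Integrable.fintype_prod fun _ => hint1
  · simp_rw [hprod]
    rw [integral_fintype_prod_eq_pow (fun x : E => Real.exp (s * (A.indicator 1 x - p))),
      Fintype.card_fin]
    calc _ ≤ Real.exp (p * s ^ 2) ^ n :=
          pow_le_pow_left₀ (integral_nonneg fun x => (Real.exp_pos _).le) hval n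
      _ = _ := by rw [← Real.exp_nat_mul]; congr 1; ring

/-- Maximal inequality: the counting deviations of finitely many sets of measure at most `ε` are
dominated by one function, whose mean is controlled by the logarithm of the number of sets. -/
lemma maximal_ineq {E ι : Type*} [MeasurableSpace E] (ν : Measure E) [IsProbabilityMeasure ν]
    (T : Finset ι) (hT : T.Nonempty) (A : ι → Set E) (hA : ∀ v, MeasurableSet (A v)) {ε s : ℝ}
    (hε : ∀ v ∈ T, ν.real (A v) ≤ ε) (hs0 : 0 < s) (hs1 : s ≤ 1) (n : ℕ) :
    ∃ H : (Fin n → E) → ℝ, Integrable H (Measure.pi fun _ => ν) ∧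
      (∀ X, ∀ v ∈ T, |∑ i, ((A v).indicator 1 (X i) - ν.real (A v))| ≤ H X) ∧
      ∫ X, H X ∂(Measure.pi fun _ => ν) ≤ (Real.log (2 * T.card) + n * ε * s ^ 2) / s := by
  set Z : ι → (Fin n → E) → ℝ := fun v X => ∑ i, ((A v).indicator 1 (X i) - ν.real (A v)) with hZ
  have hc : (0 : ℝ) < T.card := by exact_mod_cast hT.card_pos
  set M : ℝ := 2 * T.card * Real.exp (n * ε * s ^ 2) with hM
  have hM0 : 0 < M := by positivity
  have hlog : Real.log M = Real.log (2 * T.card) + n * ε * s ^ 2 := by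
    rw [hM, Real.log_mul (by positivity) (by positivity), Real.log_exp]
  have habs : |s| ≤ 1 := by rwa [abs_of_pos hs0]
  have habs' : |-s| ≤ 1 := by rwa [abs_neg]
  set W : (Fin n → E) → ℝ := fun X => ∑ v ∈ T, (Real.exp (s * Z v X) + Real.exp (-s * Z v X))
    with hW
  have hadd : ∀ v ∈ T, Integrable (fun X => Real.exp (s * Z v X) + Real.exp (-s * Z v X))
      (Measure.pi fun _ => ν) := fun v _ =>
    (mgf_bound ν (hA v) habs n).1.add (mgf_bound ν (hA v) habs' n).1
  have hWint : Integrable W (Measure.pi fun _ => ν) :=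
    integrable_finsetSum _ hadd
  have hWle : ∫ X, W X ∂(Measure.pi fun _ => ν) ≤ M := by
    rw [hW, integral_finsetSum _ hadd]
    calc _ ≤ ∑ v ∈ T, 2 * Real.exp (n * ε * s ^ 2) := by
          refine Finset.sum_le_sum fun v hv => ?_
          rw [integral_add (mgf_bound ν (hA v) habs n).1 (mgf_bound ν (hA v) habs' n).1]
          have h1 := (mgf_bound ν (hA v) habs n).2
          have h2 := (mgf_bound ν (hA v) habs' n).2
          rw [neg_sq] at h2
          have h3 : Real.exp (n * ν.real (A v) * s ^ 2) ≤ Real.exp (n * ε * s ^ 2) := by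
            have := hε v hv
            gcongr
          linarith
      _ = M := by rw [Finset.sum_const, nsmul_eq_mul, hM]; ring
  refine ⟨fun X => (Real.log M - 1 + W X / M) / s, ?_, ?_, ?_⟩
  · exact ((integrable_const _).add (hWint.div_const M)).div_const s
  · intro X v hv
    rw [le_div_iff₀ hs0]
    -- `y + 1 ≤ exp y` at `y = s |Z| - log M` linearises the logarithm of the exponential sum
    have h1 := Real.add_one_le_exp (s * |Z v X| - Real.log M)
    rw [Real.exp_sub, Real.exp_log hM0] at h1
    have h2 : Real.exp (s * |Z v X|) ≤ W X := by
      have h3 : Real.exp (s * |Z v X|) ≤ Real.exp (s * Z v X) + Real.exp (-s * Z v X) := by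
        rcases abs_cases (Z v X) with ⟨h, _⟩ | ⟨h, _⟩
        · rw [h]; linarith [Real.exp_pos (-s * Z v X)]
        · rw [h, mul_neg, ← neg_mul]; linarith [Real.exp_pos (s * Z v X)]
      refine h3.trans ?_
      exact Finset.single_le_sum (f := fun v => Real.exp (s * Z v X) + Real.exp (-s * Z v X))
        (fun v _ => by positivity) hv
    have h4 : Real.exp (s * |Z v X|) / M ≤ W X / M := by gcongr
    have : |Z v X| * s ≤ Real.log M - 1 + W X / M := by linarith
    exact this
  · rw [integral_div, integral_add (integrable_const _) (hWint.div_const M), integral_div,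
      integral_const]
    simp only [probReal_univ, smul_eq_mul, one_mul]
    rw [← hlog]
    have : (∫ X, W X ∂(Measure.pi fun _ => ν)) / M ≤ 1 := (div_le_one hM0).2 hWle
    gcongr
    linarith

/-- The anchored half-open box with upper corner `t`. -/
def box {d : ℕ} (t : Fin d → ℝ) : Set (Fin d → ℝ) := {x | ∀ j, 0 ≤ x j ∧ x j < t j}

lemma box_eq_pi {d : ℕ} (t : Fin d → ℝ) : box t = univ.pi fun j => Ico 0 (t j) := by
  ext x; simp [box]

lemma measurableSet_box {d : ℕ} (t : Fin d → ℝ) : MeasurableSet (box t) := by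
  rw [box_eq_pi]; exact MeasurableSet.univ_pi fun _ => measurableSet_Ico

lemma box_mono {d : ℕ} {s t : Fin d → ℝ} (h : s ≤ t) : box s ⊆ box t :=
  fun _ hx j => ⟨(hx j).1, (hx j).2.trans_le (h j)⟩

lemma measure_box {d : ℕ} {t : Fin d → ℝ} (ht : t ∈ Icc (0 : Fin d → ℝ) 1) :
    (volume.restrict (Icc (0 : Fin d → ℝ) 1)).real (box t) = ∏ j, t j := by
  rw [measureReal_def, restrict_Icc_eq_pi, box_eq_pi, Measure.pi_pi, ENNReal.toReal_prod]
  refine Finset.prod_congr rfl fun j _ => ?_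
  have h : Ico 0 (t j) ∩ Ico 0 1 = Ico 0 (t j) :=
    inter_eq_left.2 (Ico_subset_Ico_right (ht.2 j))
  rw [Measure.restrict_apply measurableSet_Ico, h, Real.volume_Ico, sub_zero,
    ENNReal.toReal_ofReal (ht.1 j)]

lemma measure_box_diff {d : ℕ} {l u : Fin d → ℝ} (hl : l ∈ Icc (0 : Fin d → ℝ) 1)
    (hu : u ∈ Icc (0 : Fin d → ℝ) 1) (h : l ≤ u) :
    (volume.restrict (Icc (0 : Fin d → ℝ) 1)).real (box u \ box l) = ∏ j, u j - ∏ j, l j := by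
  rw [measureReal_sdiff (box_mono h) (measurableSet_box l), measure_box hl, measure_box hu]

lemma card_eq_sum_indicator {d n : ℕ} (X : Fin n → Fin d → ℝ) (t : Fin d → ℝ) :
    ((Finset.univ.filter fun i : Fin n => ∀ j, 0 ≤ X i j ∧ X i j < t j).card : ℝ) =
      ∑ i, (box t).indicator 1 (X i) := by
  rw [Finset.card_filter]
  push_cast
  refine Finset.sum_congr rfl fun i _ => ?_
  by_cases h : ∀ j, 0 ≤ X i j ∧ X i j < t j
  · rw [if_pos h, indicator_of_mem (show X i ∈ box t from h)]; rfl
  · rw [if_neg h, indicator_of_notMem (show X i ∉ box t from h)]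

lemma locDisc_sub {d n : ℕ} (hn : 0 < n) (X : Fin n → Fin d → ℝ) {l u : Fin d → ℝ}
    (hl : l ∈ Icc (0 : Fin d → ℝ) 1) (hu : u ∈ Icc (0 : Fin d → ℝ) 1) (h : l ≤ u) :
    |locDisc X u - locDisc X l| = |∑ i, ((box u \ box l).indicator 1 (X i) -
      (volume.restrict (Icc (0 : Fin d → ℝ) 1)).real (box u \ box l))| / n := by
  have hn' : (0 : ℝ) < n := by exact_mod_cast hn
  rw [measure_box_diff hl hu h, Finset.sum_sub_distrib, locDisc, locDisc, card_eq_sum_indicator,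
    card_eq_sum_indicator]
  have : ∀ i, (box u \ box l).indicator (1 : (Fin d → ℝ) → ℝ) (X i) =
      (box u).indicator 1 (X i) - (box l).indicator 1 (X i) := by
    intro i
    rw [indicator_sdiff (box_mono h)]; rfl
  simp_rw [this]
  rw [Finset.sum_sub_distrib, Finset.sum_const, Finset.card_univ, Fintype.card_fin, nsmul_eq_mul,
    ← abs_of_pos hn', ← abs_div, abs_of_pos hn', ← abs_neg]
  congr 1
  field_simp
  ring

/-! ### Bracketing nets -/

/-- Chernoff-style count of the integer points of a simplex, with a free parameter `s`. -/
lemma card_simplex_le (d M : ℕ) {s : ℝ} (hs : 0 < s) :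
    (((Fintype.piFinset fun _ : Fin d => Finset.range (M + 1)).filter
      fun m => ∑ j, m j ≤ M).card : ℝ) ≤ Real.exp (s * M) * (1 + 1 / s) ^ d := by
  have hgeom : ∑ i ∈ Finset.range (M + 1), Real.exp (-s * i) ≤ 1 + 1 / s := by
    have hr0 : 0 ≤ Real.exp (-s) := (Real.exp_pos _).le
    have hr1 : Real.exp (-s) < 1 := Real.exp_lt_one_iff.2 (by linarith)
    have h1 : ∑ i ∈ Finset.range (M + 1), Real.exp (-s * i) ≤ (1 - Real.exp (-s))⁻¹ := by
      rw [← tsum_geometric_of_lt_one hr0 hr1]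
      simp_rw [mul_comm (-s), Real.exp_nat_mul]
      exact (summable_geometric_of_lt_one hr0 hr1).sum_le_tsum _ fun i _ => by positivity
    refine h1.trans ?_
    have h2 := Real.add_one_le_exp s
    have h3 : Real.exp (-s) ≤ 1 / (1 + s) := by
      rw [Real.exp_neg, ← one_div]; gcongr; linarith
    have h4 : s / (1 + s) ≤ 1 - Real.exp (-s) := by
      have : s / (1 + s) = 1 - 1 / (1 + s) := by field_simp; ring
      linarith
    calc (1 - Real.exp (-s))⁻¹ ≤ (s / (1 + s))⁻¹ := by gcongr
      _ = 1 + 1 / s := by field_simp; ring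
  set P := (Fintype.piFinset fun _ : Fin d => Finset.range (M + 1)) with hP
  calc ((P.filter fun m => ∑ j, m j ≤ M).card : ℝ)
      = ∑ m ∈ P.filter fun m => ∑ j, m j ≤ M, (1 : ℝ) := by simp
    _ ≤ ∑ m ∈ P.filter fun m => ∑ j, m j ≤ M,
          Real.exp (s * M) * ∏ j, Real.exp (-s * (m j : ℝ)) := by
        refine Finset.sum_le_sum fun m hm => ?_
        have hm' : ((∑ j, m j : ℕ) : ℝ) ≤ M := by exact_mod_cast (Finset.mem_filter.1 hm).2
        push_cast at hm'
        rw [← Real.exp_sum, ← Real.exp_add, ← Finset.mul_sum]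
        exact Real.one_le_exp (by nlinarith)
    _ ≤ ∑ m ∈ P, Real.exp (s * M) * ∏ j, Real.exp (-s * (m j : ℝ)) :=
        Finset.sum_le_sum_of_subset_of_nonneg (Finset.filter_subset _ _)
          fun m _ _ => by positivity
    _ = Real.exp (s * M) * ∏ j : Fin d, ∑ i ∈ Finset.range (M + 1), Real.exp (-s * (i : ℝ)) := by
        rw [← Finset.mul_sum, Finset.prod_univ_sum]
    _ ≤ Real.exp (s * M) * (1 + 1 / s) ^ d := by
        rw [Finset.prod_const, Finset.card_univ, Fintype.card_fin]
        gcongr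

/-- Bracketing nets: corners of the form `exp (-δ m)` with integer vectors `m` of bounded sum,
together with `0`, bracket every anchored box up to volume `4⁻ᵏ`. -/
lemma exists_net {d : ℕ} (hd : 1 ≤ d) (k : ℕ) : ∃ A : Finset (Fin d → ℝ),
    (A.card : ℝ) ≤ (30 * 16 ^ k) ^ d ∧ A.Nonempty ∧ (∀ v ∈ A, v ∈ Icc (0 : Fin d → ℝ) 1) ∧
    ∀ t ∈ Icc (0 : Fin d → ℝ) 1, ∃ l ∈ A, ∃ u ∈ A, l ≤ t ∧ t ≤ u ∧
      ∏ j, u j - ∏ j, l j ≤ (1 / 4) ^ k := by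
  have hd' : (1 : ℝ) ≤ d := by exact_mod_cast hd
  -- with this mesh, lowering all `d` coordinates by one step costs volume at most `4⁻ᵏ`
  set δ : ℝ := (1 / 4) ^ k / d with hδ
  have hδ0 : 0 < δ := by positivity
  have hδd : δ * d = (1 / 4) ^ k := by rw [hδ]; field_simp
  set M : ℕ := d * 16 ^ k with hM
  set P := ((Fintype.piFinset fun _ : Fin d => Finset.range (M + d + 1)).filter
      fun m => ∑ j, m j ≤ M + d) with hP
  have hmemP : ∀ m : Fin d → ℕ, ∑ j, m j ≤ M + d → m ∈ P := by
    intro m hm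
    rw [hP, Finset.mem_filter, Fintype.mem_piFinset]
    refine ⟨fun j => ?_, hm⟩
    have := Finset.single_le_sum (f := m) (fun _ _ => Nat.zero_le _) (Finset.mem_univ j)
    rw [Finset.mem_range]; omega
  set pt : (Fin d → ℕ) → Fin d → ℝ := fun m j => Real.exp (-δ * m j) with hpt
  have hprod : ∀ m : Fin d → ℕ, ∏ j, pt m j = Real.exp (-δ * (∑ j, m j : ℕ)) := by
    intro m
    rw [hpt]; push_cast
    rw [Finset.mul_sum, Real.exp_sum]
  have hptmem : ∀ m, pt m ∈ Icc (0 : Fin d → ℝ) 1 := by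
    intro m
    refine ⟨fun j => (Real.exp_pos _).le, fun j => Real.exp_le_one_iff.2 ?_⟩
    have : 0 ≤ δ * m j := by positivity
    linarith
  have hzero : (0 : Fin d → ℝ) ∈ Icc (0 : Fin d → ℝ) 1 := ⟨le_rfl, zero_le_one⟩
  refine ⟨insert 0 (P.image pt), ?_, Finset.insert_nonempty _ _, ?_, ?_⟩
  · have h1 : ((insert 0 (P.image pt)).card : ℝ) ≤ P.card + 1 := by
      exact_mod_cast (Finset.card_insert_le _ _).trans (Nat.succ_le_succ Finset.card_image_le)
    have h2 := card_simplex_le d (M + d) (s := (1 / 16) ^ k) (by positivity)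
    have h16 : (1 : ℝ) ≤ 16 ^ k := one_le_pow₀ (by norm_num)
    have hinv : (1 / 16 : ℝ) ^ k * 16 ^ k = 1 := by rw [← mul_pow]; norm_num
    have h3 : Real.exp ((1 / 16) ^ k * ((M + d : ℕ) : ℝ)) ≤ (15 / 2) ^ d := by
      have e1 : (1 / 16 : ℝ) ^ k * ((M + d : ℕ) : ℝ) ≤ d * 2 := by
        rw [hM]; push_cast
        have : (1 / 16 : ℝ) ^ k ≤ 1 := pow_le_one₀ (by norm_num) (by norm_num)
        nlinarith
      refine (Real.exp_le_exp.2 e1).trans ?_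
      rw [Real.exp_nat_mul]
      gcongr
      rw [show (2 : ℝ) = 1 + 1 by norm_num, Real.exp_add]
      nlinarith [Real.exp_one_lt_d9, Real.exp_pos 1]
    have h4 : (1 + 1 / (1 / 16 : ℝ) ^ k) ≤ 2 * 16 ^ k := by
      rw [one_div_pow, one_div_one_div]; linarith
    have h5 : (P.card : ℝ) ≤ (15 * 16 ^ k) ^ d := by
      refine h2.trans ?_
      calc _ ≤ (15 / 2 : ℝ) ^ d * (2 * 16 ^ k) ^ d := by gcongr
        _ = _ := by rw [← mul_pow]; congr 1; ring
    have h6 : (1 : ℝ) ≤ (15 * 16 ^ k) ^ d := one_le_pow₀ (by linarith)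
    calc _ ≤ 2 * (15 * 16 ^ k : ℝ) ^ d := by linarith
      _ ≤ 2 ^ d * (15 * 16 ^ k : ℝ) ^ d := by
          gcongr
          exact le_self_pow₀ (by norm_num) (by omega)
      _ = _ := by rw [← mul_pow]; congr 1; ring
  · intro v hv
    rcases Finset.mem_insert.1 hv with rfl | hv
    · exact hzero
    · obtain ⟨m, _, rfl⟩ := Finset.mem_image.1 hv
      exact hptmem m
  · classical
    intro t ht
    -- Take `m` of maximal sum subject to `∑ m ≤ M` and `t ≤ pt m`. If the sum is `M`, the box of
    -- `pt m` has volume at most `4⁻ᵏ`; otherwise raising any entry of `m` violates `t ≤ pt m`.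
    set Q := P.filter fun m => ∑ j, m j ≤ M ∧ t ≤ pt m with hQ
    have hQne : Q.Nonempty := by
      refine ⟨0, Finset.mem_filter.2 ⟨hmemP _ (by simp), by simp, ?_⟩⟩
      intro j; simpa [hpt] using ht.2 j
    obtain ⟨m, hmQ, hmax⟩ := Q.exists_max_image (fun m => ∑ j, m j) hQne
    obtain ⟨hmP, hmM, hmt⟩ := Finset.mem_filter.1 hmQ
    rcases hmM.eq_or_lt with heq | hlt
    · refine ⟨0, Finset.mem_insert_self _ _, pt m,
        Finset.mem_insert_of_mem (Finset.mem_image_of_mem _ hmP), ht.1, hmt, ?_⟩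
      have hz : ∏ j : Fin d, (0 : Fin d → ℝ) j = 0 :=
        Finset.prod_eq_zero (Finset.mem_univ ⟨0, by omega⟩) rfl
      rw [hz, sub_zero, hprod, heq, hM]
      have e : -δ * ((d * 16 ^ k : ℕ) : ℝ) = -(4 : ℝ) ^ k := by
        push_cast
        have : (1 / 4 : ℝ) ^ k * 16 ^ k = 4 ^ k := by rw [← mul_pow]; norm_num
        linear_combination (-(16 : ℝ) ^ k) * hδd - this
      rw [e, Real.exp_neg, one_div_pow, ← one_div]
      gcongr
      linarith [Real.add_one_le_exp ((4 : ℝ) ^ k)]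
    · have hsum1 : ∑ j, (m j + 1) = ∑ j, m j + d := by
        rw [Finset.sum_add_distrib]; simp
      refine ⟨pt fun j => m j + 1, Finset.mem_insert_of_mem (Finset.mem_image_of_mem _ ?_), pt m,
        Finset.mem_insert_of_mem (Finset.mem_image_of_mem _ hmP), ?_, hmt, ?_⟩
      · exact hmemP _ (by rw [hsum1]; omega)
      · intro j
        by_contra hj
        have hj' : t j ≤ pt (fun j => m j + 1) j := (not_le.1 hj).le
        have hs : ∑ i, (Function.update m j (m j + 1)) i = ∑ i, m i + 1 := by
          rw [Finset.sum_update_of_mem (Finset.mem_univ j), ← Finset.add_sum_erase _ _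
            (Finset.mem_univ j), Finset.sdiff_singleton_eq_erase]
          ring
        have hin : Function.update m j (m j + 1) ∈ Q := by
          refine Finset.mem_filter.2 ⟨hmemP _ (by rw [hs]; omega), by rw [hs]; omega, ?_⟩
          intro i
          by_cases hi : i = j
          · subst hi; simpa [hpt] using hj'
          · simpa [hpt, hi] using hmt i
        have := hmax _ hin
        simp only [hs] at this
        omega
      · rw [hprod, hprod, hsum1]
        push_cast
        rw [mul_add, Real.exp_add]
        have e1 : Real.exp (-δ * ∑ j, (m j : ℝ)) ≤ 1 := by
          refine Real.exp_le_one_iff.2 ?_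
          have : 0 ≤ δ * ∑ j, (m j : ℝ) := by positivity
          linarith
        have e2 := Real.add_one_le_exp (-δ * d)
        have e3 : Real.exp (-δ * d) ≤ 1 := Real.exp_le_one_iff.2 (by nlinarith)
        rw [← hδd]
        nlinarith [Real.exp_pos (-δ * ∑ j, (m j : ℝ))]

/-! ### Chaining and the upper bound -/

/-- One link of the chain: all increments of the local discrepancy from a point of the `k`-th net
to a parent are dominated by one function with mean of order `(k + 1) 2⁻ᵏ √(d / n)`. -/
lemma chain_link {d n : ℕ} (hd : 1 ≤ d) (hn : d ≤ n) (k : ℕ) (hk : 2 ^ k * Real.sqrt (d / n) ≤ 1)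
    (T : Finset (Fin d → ℝ)) (hT : T.Nonempty) (hcard : (T.card : ℝ) ≤ (30 * 16 ^ k) ^ d)
    (hTmem : ∀ v ∈ T, v ∈ Icc (0 : Fin d → ℝ) 1) (par : (Fin d → ℝ) → Fin d → ℝ)
    (hpar : ∀ v ∈ T, par v ∈ Icc (0 : Fin d → ℝ) 1 ∧ par v ≤ v ∧
      ∏ j, v j - ∏ j, par v j ≤ 4 * (1 / 4) ^ k) :
    ∃ H : (Fin n → Fin d → ℝ) → ℝ,
      Integrable H (Measure.pi fun _ : Fin n => volume.restrict (Set.Icc (0 : Fin d → ℝ) 1)) ∧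
      (∀ X, ∀ v ∈ T, |locDisc X v - locDisc X (par v)| ≤ H X) ∧
      ∫ X, H X ∂(Measure.pi fun _ : Fin n => volume.restrict (Set.Icc (0 : Fin d → ℝ) 1)) ≤
        64 * Real.sqrt (d / n) * ((k + 1) / 2 ^ k) := by
  have hd' : (1 : ℝ) ≤ d := by exact_mod_cast hd
  have hnd : (d : ℝ) ≤ n := by exact_mod_cast hn
  have hn' : (0 : ℝ) < n := by linarith
  set ρ := Real.sqrt (d / n) with hρ
  have hρ0 : 0 < ρ := Real.sqrt_pos.2 (by positivity)
  have hρ2 : ρ ^ 2 * n = d := by rw [hρ, Real.sq_sqrt (by positivity)]; field_simp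
  obtain ⟨H, hint, hle, hbd⟩ := maximal_ineq (volume.restrict (Icc (0 : Fin d → ℝ) 1)) T hT
    (fun v => box v \ box (par v))
    (fun v => (measurableSet_box v).diff (measurableSet_box (par v)))
    (ε := 4 * (1 / 4) ^ k) (s := 2 ^ k * ρ)
    (fun v hv => by
      rw [measure_box_diff (hpar v hv).1 (hTmem v hv) (hpar v hv).2.1]
      exact (hpar v hv).2.2) (by positivity) hk n
  refine ⟨fun X => H X / n, hint.div_const _, ?_, ?_⟩
  · intro X v hv
    rw [locDisc_sub (by omega) X (hpar v hv).1 (hTmem v hv) (hpar v hv).2.1]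
    exact div_le_div_of_nonneg_right (hle X v hv) hn'.le
  · rw [integral_div, div_le_iff₀ hn']
    refine hbd.trans ?_
    have hc : (0 : ℝ) < T.card := by exact_mod_cast hT.card_pos
    have hlog : Real.log (2 * T.card) ≤ 60 * d * (k + 1) := by
      have h1 : (2 * T.card : ℝ) ≤ (60 * 16 ^ k) ^ d := by
        calc (2 * T.card : ℝ) ≤ 2 ^ d * (30 * 16 ^ k) ^ d := by
              gcongr
              exact le_self_pow₀ (by norm_num) (by omega)
          _ = _ := by rw [← mul_pow]; congr 1; ring
      refine (Real.log_le_log (by positivity) h1).trans ?_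
      rw [Real.log_pow, Real.log_mul (by norm_num) (by positivity), Real.log_pow]
      have a := Real.log_le_sub_one_of_pos (show (0 : ℝ) < 60 by norm_num)
      have b := Real.log_le_sub_one_of_pos (show (0 : ℝ) < 16 by norm_num)
      have c : (k : ℝ) * Real.log 16 ≤ k * 15 := by gcongr; linarith
      have hk0 : (0 : ℝ) ≤ k := by positivity
      have e : Real.log 60 + k * Real.log 16 ≤ 60 * (k + 1) := by linarith
      calc (d : ℝ) * (Real.log 60 + k * Real.log 16) ≤ d * (60 * (k + 1)) := by gcongr
        _ = _ := by ring
    have hp : (0 : ℝ) < 2 ^ k := by positivity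
    have h4 : (1 / 4 : ℝ) ^ k * (2 ^ k) ^ 2 = 1 := by
      rw [← pow_mul, mul_comm k 2, pow_mul, ← mul_pow]; norm_num
    have hvar : (n : ℝ) * (4 * (1 / 4) ^ k) * (2 ^ k * ρ) ^ 2 = 4 * d := by
      linear_combination (4 * n * ρ ^ 2) * h4 + 4 * hρ2
    rw [hvar, div_le_iff₀ (by positivity)]
    have hrhs : 64 * ρ * ((k + 1) / 2 ^ k) * n * (2 ^ k * ρ) = 64 * d * (k + 1) := by
      rw [← hρ2]; field_simp
    rw [hrhs]
    have : (0 : ℝ) ≤ d * k := by positivity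
    nlinarith

/-- Chaining: telescoping the local discrepancy along parents in successively coarser nets. The
factor `4 - (k + 3) / 2 ^ k` is the partial sum of the series of `(i + 1) / 2 ^ i`. -/
lemma chain {d n : ℕ} (hd : 1 ≤ d) (hn : d ≤ n) (A : ℕ → Finset (Fin d → ℝ))
    (hcard : ∀ k, ((A k).card : ℝ) ≤ (30 * 16 ^ k) ^ d) (hne : ∀ k, (A k).Nonempty)
    (hmem : ∀ k, ∀ v ∈ A k, v ∈ Icc (0 : Fin d → ℝ) 1)
    (hbr : ∀ k, ∀ t ∈ Icc (0 : Fin d → ℝ) 1, ∃ l ∈ A k, ∃ u ∈ A k, l ≤ t ∧ t ≤ u ∧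
      ∏ j, u j - ∏ j, l j ≤ (1 / 4) ^ k) (k : ℕ) (hk : 2 ^ k * Real.sqrt (d / n) ≤ 1) :
    ∃ H : (Fin n → Fin d → ℝ) → ℝ,
      Integrable H (Measure.pi fun _ : Fin n => volume.restrict (Set.Icc (0 : Fin d → ℝ) 1)) ∧
      (∀ X, ∀ v ∈ A k, |locDisc X v| ≤ H X) ∧
      ∫ X, H X ∂(Measure.pi fun _ : Fin n => volume.restrict (Set.Icc (0 : Fin d → ℝ) 1)) ≤
        64 * Real.sqrt (d / n) * (4 - (k + 3) / 2 ^ k) := by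
  induction k with
  | zero =>
    have hz : ∏ j : Fin d, (0 : Fin d → ℝ) j = 0 :=
      Finset.prod_eq_zero (Finset.mem_univ ⟨0, by omega⟩) rfl
    obtain ⟨H, h1, h2, h3⟩ := chain_link hd hn 0 hk (A 0) (hne 0) (hcard 0) (hmem 0) (fun _ => 0)
      (fun v hv => ⟨⟨le_rfl, zero_le_one⟩, (hmem 0 v hv).1, by
        have := prod_mem_unit (hmem 0 v hv)
        rw [hz]; norm_num; linarith⟩)
    refine ⟨H, h1, fun X v hv => ?_, h3.trans (le_of_eq (by norm_num))⟩
    have hl0 : locDisc X 0 = 0 := by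
      have he : ∀ i : Fin n, ¬ ∀ j : Fin d, 0 ≤ X i j ∧ X i j < (0 : Fin d → ℝ) j := by
        intro i h
        have := h ⟨0, by omega⟩
        exact absurd this.2 (not_lt.2 this.1)
      rw [locDisc, hz, Finset.filter_false_of_mem fun i _ => he i]
      simp
    simpa [hl0] using h2 X v hv
  | succ k ih =>
    have hρ : 0 ≤ Real.sqrt (d / n) := Real.sqrt_nonneg _
    obtain ⟨H, h1, h2, h3⟩ := ih (le_trans (by gcongr <;> norm_num) hk)
    have hchoose : ∀ v : Fin d → ℝ, ∃ l : Fin d → ℝ, v ∈ A (k + 1) → l ∈ A k ∧ l ≤ v ∧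
        ∏ j, v j - ∏ j, l j ≤ (1 / 4) ^ k := by
      intro v
      by_cases hv : v ∈ A (k + 1)
      · obtain ⟨l, hl, u, _, hlv, hvu, hlu⟩ := hbr k v (hmem _ v hv)
        refine ⟨l, fun _ => ⟨hl, hlv, ?_⟩⟩
        have : ∏ j, v j ≤ ∏ j, u j :=
          Finset.prod_le_prod (fun j _ => (hmem _ v hv).1 j) fun j _ => hvu j
        linarith
      · exact ⟨0, fun h => absurd h hv⟩
    choose par hpar using hchoose
    obtain ⟨H', h1', h2', h3'⟩ := chain_link hd hn (k + 1) hk (A (k + 1)) (hne _) (hcard _)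
      (hmem _) par (fun v hv => ⟨hmem k _ (hpar v hv).1, (hpar v hv).2.1,
        (hpar v hv).2.2.trans (le_of_eq (by rw [pow_succ]; ring))⟩)
    refine ⟨fun X => H X + H' X, h1.add h1', fun X v hv => ?_, ?_⟩
    · have a := h2 X _ (hpar v hv).1
      have b := h2' X v hv
      calc |locDisc X v| = |locDisc X (par v) + (locDisc X v - locDisc X (par v))| := by
            congr 1; ring
        _ ≤ _ := (abs_add_le _ _).trans (add_le_add a b)
    · rw [integral_add h1 h1']
      refine (add_le_add h3 h3').trans (le_of_eq ?_)
      push_cast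
      rw [pow_succ]
      field_simp
      ring

lemma upper_bound {d n : ℕ} (hd : 1 ≤ d) (hn : d ≤ n) :
    (∫ X : Fin n → Fin d → ℝ, starDisc X
          ∂(Measure.pi fun _ : Fin n => volume.restrict (Set.Icc (0 : Fin d → ℝ) 1)))
        ≤ 260 * Real.sqrt (d / n) := by
  have hd' : (1 : ℝ) ≤ d := by exact_mod_cast hd
  have hnd : (d : ℝ) ≤ n := by exact_mod_cast hn
  have hn' : (0 : ℝ) < n := by linarith
  have hρ0 : 0 < Real.sqrt (d / n) := Real.sqrt_pos.2 (by positivity)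
  have hρ1 : Real.sqrt (d / n) ≤ 1 := by
    rw [Real.sqrt_le_iff, one_pow]; exact ⟨zero_le_one, (div_le_one hn').2 hnd⟩
  choose A hcard hne hmem hbr using fun k => exists_net hd k
  -- the chain stops at brackets of volume comparable to the target `√(d / n)`
  obtain ⟨K, hK1, hK2⟩ := exists_nat_pow_near (x := 1 / Real.sqrt (d / n)) (y := (4 : ℝ))
    (by rw [le_div_iff₀ hρ0]; linarith) (by norm_num)
  rw [le_div_iff₀ hρ0] at hK1
  rw [div_lt_iff₀ hρ0] at hK2
  have hk : 2 ^ K * Real.sqrt (d / n) ≤ 1 := le_trans (by gcongr; norm_num) hK1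
  obtain ⟨H, h1, h2, h3⟩ := chain hd hn A hcard hne hmem hbr K hk
  have hpt : ∀ X, starDisc X ≤ H X + (1 / 4) ^ K := by
    intro X
    refine starDisc_le X fun t ht => ?_
    obtain ⟨l, hl, u, hu, hlt, htu, hlu⟩ := hbr K t ht
    have a := abs_le.1 (h2 X l hl)
    have b := abs_le.1 (h2 X u hu)
    have p1 : ∏ j, l j ≤ ∏ j, t j :=
      Finset.prod_le_prod (fun j _ => (hmem K l hl).1 j) fun j _ => hlt j
    have p2 : ∏ j, t j ≤ ∏ j, u j :=
      Finset.prod_le_prod (fun j _ => ht.1 j) fun j _ => htu j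
    have cmono : ∀ {s t : Fin d → ℝ}, s ≤ t →
        ((Finset.univ.filter fun i : Fin n => ∀ j, 0 ≤ X i j ∧ X i j < s j).card : ℝ) / n ≤
        ((Finset.univ.filter fun i : Fin n => ∀ j, 0 ≤ X i j ∧ X i j < t j).card : ℝ) / n := by
      intro s t hst
      gcongr with i hi j
      exact hst _
    have c1 := cmono hlt
    have c2 := cmono htu
    simp only [locDisc] at a b ⊢
    rw [abs_le]
    constructor <;> linarith
  have hε : (1 / 4 : ℝ) ^ K ≤ 4 * Real.sqrt (d / n) := by
    rw [one_div_pow, div_le_iff₀ (by positivity)]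
    rw [pow_succ] at hK2
    linarith
  calc _ ≤ ∫ X : Fin n → Fin d → ℝ, (H X + (1 / 4) ^ K)
          ∂(Measure.pi fun _ : Fin n => volume.restrict (Set.Icc (0 : Fin d → ℝ) 1)) :=
        integral_mono (integrable_starDisc d n) (h1.add (integrable_const _)) hpt
    _ ≤ 64 * Real.sqrt (d / n) * 4 + 4 * Real.sqrt (d / n) := by
        rw [integral_add h1 (integrable_const _), integral_const]
        simp only [probReal_univ, smul_eq_mul, one_mul]
        refine add_le_add (h3.trans ?_) hε
        have : (0 : ℝ) ≤ (K + 3) / 2 ^ K := by positivity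
        gcongr
        linarith
    _ = _ := by ring

/-- The expected star discrepancy of `n ≥ d` i.i.d. uniform random points in `[0,1]^d`
is of order `√(d/n)`, with universal constants. -/
theorem stmt16 :
    ∃ c C : ℝ, 0 < c ∧ 0 < C ∧ ∀ d n : ℕ, 1 ≤ d → d ≤ n →
      c * Real.sqrt (d / n) ≤
        (∫ X : Fin n → Fin d → ℝ, starDisc X
          ∂(Measure.pi fun _ : Fin n => volume.restrict (Set.Icc (0 : Fin d → ℝ) 1))) ∧
      (∫ X : Fin n → Fin d → ℝ, starDisc X
          ∂(Measure.pi fun _ : Fin n => volume.restrict (Set.Icc (0 : Fin d → ℝ) 1)))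
        ≤ C * Real.sqrt (d / n) := by
  refine ⟨(1 - Real.exp (-(1 / 64))) / 4, 260, ?_, by norm_num, fun d n hd hn =>
    ⟨lower_bound hd hn, upper_bound hd hn⟩⟩
  have := Real.exp_lt_one_iff.2 (show (-(1 / 64) : ℝ) < 0 by norm_num)
  linarith
end
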